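/- arXiv:1711.02337 — 2 statements merged into one kernel-verified Lean document; each statement's English description precedes it below -/
import Mathlib

section
/- For every nonnegative integer n, the identity Σ_{π∈Alt_{2n+1}} q^{maj(η_{2n+1}π^{-1})} = Σ_{π∈Alt_{2n+1}} q^{inv(π)+nasc(π_e)} holds as an identity of polynomials in q. -/
open Finset

attribute [local instance 10] Classical.propDecidable

noncomputable section

namespace Paper

/-! ### Words and permutation statistics (all words are 1-based). -/

/-- The word (one-line notation, 1-based) of a permutation of `{1, …, N}`:
`word π i = π(i)` for `1 ≤ i ≤ N`, and `0` otherwise. -/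
def word {N : ℕ} (π : Equiv.Perm (Fin N)) (i : ℕ) : ℕ :=
  if h : 1 ≤ i ∧ i ≤ N then (π ⟨i - 1, by omega⟩ : ℕ) + 1 else 0

/-- The major index of a word of length `N`: the sum of the descents. -/
def majW (N : ℕ) (w : ℕ → ℕ) : ℕ :=
  ∑ i ∈ Finset.Icc 1 (N - 1), if w (i + 1) < w i then i else 0

/-- The number of inversions of a word of length `N`. -/
def invW (N : ℕ) (w : ℕ → ℕ) : ℕ :=
  (((Finset.Icc 1 N) ×ˢ (Finset.Icc 1 N)).filter
    fun p => p.1 < p.2 ∧ w p.2 < w p.1).card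

/-- The number of descents of a word of length `m`. -/
def desW (m : ℕ) (w : ℕ → ℕ) : ℕ :=
  ((Finset.Icc 1 (m - 1)).filter fun i => w (i + 1) < w i).card

/-- The number of ascents of a word of length `m`. -/
def ascW (m : ℕ) (w : ℕ → ℕ) : ℕ :=
  ((Finset.Icc 1 (m - 1)).filter fun i => w i < w (i + 1)).card

/-- The number of non-descents of a word of length `m`. -/
def ndesW (m : ℕ) (w : ℕ → ℕ) : ℕ :=
  ((Finset.Icc 1 m).filter fun i => i = m ∨ w i < w (i + 1)).card

/-- The number of non-ascents of a word of length `m`. -/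
def nascW (m : ℕ) (w : ℕ → ℕ) : ℕ :=
  ((Finset.Icc 1 m).filter fun i => i = m ∨ ¬ w i < w (i + 1)).card

/-- `π_e = π₂π₄⋯`, the subword of even-position entries, as a 1-based word. -/
def evenWord {N : ℕ} (π : Equiv.Perm (Fin N)) (j : ℕ) : ℕ := word π (2 * j)

/-- `π_o = π₁π₃⋯`, the subword of odd-position entries, as a 1-based word. -/
def oddWord {N : ℕ} (π : Equiv.Perm (Fin N)) (j : ℕ) : ℕ := word π (2 * j - 1)

/-- A word of length `N` is alternating: `w₁ < w₂ > w₃ < w₄ > ⋯`. -/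
def IsAltW (N : ℕ) (w : ℕ → ℕ) : Prop :=
  ∀ i ∈ Finset.Icc 1 (N - 1), (i % 2 = 1 → w i < w (i + 1)) ∧ (i % 2 = 0 → w (i + 1) < w i)

/-- A word of length `N` is reverse alternating: `w₁ > w₂ < w₃ > w₄ < ⋯`. -/
def IsRaltW (N : ℕ) (w : ℕ → ℕ) : Prop :=
  ∀ i ∈ Finset.Icc 1 (N - 1), (i % 2 = 1 → w (i + 1) < w i) ∧ (i % 2 = 0 → w i < w (i + 1))

/-- `Alt_N`, the set of alternating permutations of `{1, …, N}`. -/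
def altPerms (N : ℕ) : Finset (Equiv.Perm (Fin N)) :=
  Finset.univ.filter fun π => IsAltW N (word π)

/-- `Ralt_N`, the set of reverse alternating permutations of `{1, …, N}`. -/
def raltPerms (N : ℕ) : Finset (Equiv.Perm (Fin N)) :=
  Finset.univ.filter fun π => IsRaltW N (word π)

/-- `κ_N = (1)(2,3)(4,5)⋯`, acting on the 1-based values `{1, …, N}`. -/
def kappaNat (N j : ℕ) : ℕ :=
  if j % 2 = 0 ∧ 2 ≤ j ∧ j + 1 ≤ N then j + 1
  else if j % 2 = 1 ∧ 3 ≤ j ∧ j ≤ N then j - 1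
  else j

/-- `η_N = (1,2)(3,4)⋯`, acting on the 1-based values `{1, …, N}`. -/
def etaNat (N j : ℕ) : ℕ :=
  if j % 2 = 1 ∧ j + 1 ≤ N then j + 1
  else if j % 2 = 0 ∧ 2 ≤ j ∧ j ≤ N then j - 1
  else j

/-- `maj(π⁻¹)`. -/
def majInv (N : ℕ) (π : Equiv.Perm (Fin N)) : ℕ := majW N (word π.symm)

/-- `maj(κ_N π⁻¹)`. -/
def majKappaInv (N : ℕ) (π : Equiv.Perm (Fin N)) : ℕ :=
  majW N fun i => kappaNat N (word π.symm i)

/-- `maj(η_N π⁻¹)`. -/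
def majEtaInv (N : ℕ) (π : Equiv.Perm (Fin N)) : ℕ :=
  majW N fun i => etaNat N (word π.symm i)

/-- The reversal permutation `i ↦ N + 1 - i` of `Fin N`. -/
def revPerm (N : ℕ) : Equiv.Perm (Fin N) :=
  ⟨Fin.rev, Fin.rev, fun i => Fin.rev_rev i, fun i => Fin.rev_rev i⟩

/-- `φ(π)ᵢ = (N+1) - π_{N+1-i}`. -/
def phiMap {N : ℕ} (π : Equiv.Perm (Fin N)) : Equiv.Perm (Fin N) :=
  ((revPerm N).trans π).trans (revPerm N)

/-! ### Lattice paths.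

A path with `L` unit steps is encoded by `s : Fin L → Bool` (`true` = up-step `(1,1)`,
`false` = down-step `(1,-1)`). -/

/-- The vertical displacement of the `j`-th step. -/
def stepVal {L : ℕ} (s : Fin L → Bool) (j : ℕ) : ℤ :=
  if h : j < L then (if s ⟨j, h⟩ then 1 else -1) else 0

/-- The height of the path after `i` steps. -/
def pht {L : ℕ} (s : Fin L → Bool) (i : ℕ) : ℤ := ∑ j ∈ Finset.range i, stepVal s j

/-- A Dyck path: stays (weakly) above the `x`-axis and ends at height `0`. -/
def IsDyck {L : ℕ} (s : Fin L → Bool) : Prop :=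
  (∀ i ∈ Finset.range (L + 1), 0 ≤ pht s i) ∧ pht s L = 0

/-- The Dyck paths with `L` steps. -/
def dyckPaths (L : ℕ) : Finset (Fin L → Bool) := Finset.univ.filter fun s => IsDyck s

/-- The (indices of the) valleys of a path: a down-step followed by an up-step. -/
def valleys {L : ℕ} (s : Fin L → Bool) : Finset ℕ :=
  (Finset.Icc 1 (L - 1)).filter fun i => stepVal s (i - 1) = -1 ∧ stepVal s i = 1

/-- The (indices of the) peaks of a path: an up-step followed by a down-step. -/
def peaks {L : ℕ} (s : Fin L → Bool) : Finset ℕ :=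
  (Finset.Icc 1 (L - 1)).filter fun i => stepVal s (i - 1) = 1 ∧ stepVal s i = -1

/-- The (indices of the) high peaks of a path: peaks of height at least `2`. -/
def highPeaks {L : ℕ} (s : Fin L → Bool) : Finset ℕ :=
  (peaks s).filter fun i => 2 ≤ pht s i

/-- The height over abscissa `x` of a path starting at `(-m, 0)`. -/
def aht (m : ℕ) {L : ℕ} (s : Fin L → Bool) (x : ℤ) : ℤ := pht s (x + m).toNat

/-- `D₁ < D₂`, for `D₁` starting at `(-m₁,0)` and `D₂` at `(-m₂,0)`, `m₁ ≤ m₂`: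
strictly below on the common range of abscissas. -/
def PathLT (m₁ m₂ : ℕ) {L₁ L₂ : ℕ} (s₁ : Fin L₁ → Bool) (s₂ : Fin L₂ → Bool) : Prop :=
  ∀ x ∈ Finset.Icc (-(m₁ : ℤ)) (m₁ : ℤ), aht m₁ s₁ x < aht m₂ s₂ x

/-- `D₁ ≤ D₂`: weakly below, sharing no step. -/
def PathLE (m₁ m₂ : ℕ) {L₁ L₂ : ℕ} (s₁ : Fin L₁ → Bool) (s₂ : Fin L₂ → Bool) : Prop :=
  (∀ x ∈ Finset.Icc (-(m₁ : ℤ)) (m₁ : ℤ), aht m₁ s₁ x ≤ aht m₂ s₂ x) ∧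
    ∀ x ∈ Finset.Icc (-(m₁ : ℤ)) ((m₁ : ℤ) - 1),
      ¬(aht m₁ s₁ x = aht m₂ s₂ x ∧ aht m₁ s₁ (x + 1) = aht m₂ s₂ (x + 1))

/-- The abscissas of the common lattice points of two paths. -/
def interPts (m₁ m₂ : ℕ) {L₁ L₂ : ℕ} (s₁ : Fin L₁ → Bool) (s₂ : Fin L₂ → Bool) : Finset ℤ :=
  (Finset.Icc (-(m₁ : ℤ)) (m₁ : ℤ)).filter fun x => aht m₁ s₁ x = aht m₂ s₂ x

/-- `Dyck^k_{2n}`: tuples `(D₁, …, D_k)` with `D_i ∈ Dyck((-n-2i+2,0) → (n+2i-2,0))`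
(0-based: `D_i` has half-length `n + 2i`). -/
abbrev DyckTuple (n k : ℕ) := ∀ i : Fin k, Fin (2 * (n + 2 * (i : ℕ))) → Bool

/-- The tuples `(D₁ ≤ D₂ ≤ ⋯ ≤ D_k) ∈ Dyck^k_{2n}`. -/
def weakTuples (n k : ℕ) : Finset (DyckTuple n k) :=
  Finset.univ.filter fun D =>
    (∀ i : Fin k, IsDyck (D i)) ∧
      ∀ (i : ℕ) (h : i + 1 < k),
        PathLE (n + 2 * i) (n + 2 * (i + 1)) (D ⟨i, by omega⟩) (D ⟨i + 1, h⟩)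

/-- The tuples `(D₁ < D₂ < ⋯ < D_k) ∈ Dyck^k_{2n}`. -/
def strictTuples (n k : ℕ) : Finset (DyckTuple n k) :=
  Finset.univ.filter fun D =>
    (∀ i : Fin k, IsDyck (D i)) ∧
      ∀ (i : ℕ) (h : i + 1 < k),
        PathLT (n + 2 * i) (n + 2 * (i + 1)) (D ⟨i, by omega⟩) (D ⟨i + 1, h⟩)

/-- The lattice points of a path starting at `(-m, 0)`, as a finite subset of `ℤ × ℤ`. -/
def pathPoints (m : ℕ) {L : ℕ} (s : Fin L → Bool) : Finset (ℤ × ℤ) :=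
  (Finset.range (L + 1)).image fun t : ℕ => (-(m : ℤ) + (t : ℤ), pht s t)

/-- The non-valley lattice points of a path starting at `(-m, 0)`. -/
def nonValleyPoints (m : ℕ) {L : ℕ} (s : Fin L → Bool) : Finset (ℤ × ℤ) :=
  ((Finset.range (L + 1)).filter fun t => t ∉ valleys s).image
    fun t : ℕ => (-(m : ℤ) + (t : ℤ), pht s t)

section Weights

variable {F : Type*} [Field F]

/-- The `i`-th lattice point (in `ℤ × ℕ`) of a path starting at `(a, 0)`. -/
def ptOf (a : ℤ) {L : ℕ} (s : Fin L → Bool) (i : ℕ) : ℤ × ℕ := (a + i, (pht s i).toNat)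

/-- `wt_V(D) = ∏_{p ∈ D} wt(p) · ∏_{p ∈ V(D)} w̃t(p)` for a path starting at `(a, 0)`. -/
def wtVal (wt wte : ℤ × ℕ → F) (a : ℤ) {L : ℕ} (s : Fin L → Bool) : F :=
  (∏ i ∈ Finset.range (L + 1), wt (ptOf a s i)) * ∏ i ∈ valleys s, wte (ptOf a s i)

/-- `wt_HP(D) = ∏_{p ∈ D} wt(p) · ∏_{p ∈ HP(D)} w̃t(p)` for a path starting at `(a, 0)`. -/
def wtHigh (wt wte : ℤ × ℕ → F) (a : ℤ) {L : ℕ} (s : Fin L → Bool) : F :=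
  (∏ i ∈ Finset.range (L + 1), wt (ptOf a s i)) * ∏ i ∈ highPeaks s, wte (ptOf a s i)

/-- `∏_{p ∈ D₁ ∩ D₂} f(p)`, for `D₁` starting at `(-m₁,0)` and `D₂` at `(-m₂,0)`. -/
def interProd (f : ℤ × ℕ → F) (m₁ m₂ : ℕ) {L₁ L₂ : ℕ}
    (s₁ : Fin L₁ → Bool) (s₂ : Fin L₂ → Bool) : F :=
  ∏ x ∈ interPts m₁ m₂ s₁ s₂, f (x, (aht m₁ s₁ x).toNat)

/-- The sum over `(D₁ ≤ ⋯ ≤ D_k) ∈ Dyck^k_{2n}` of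
`wt_V(D₁)⋯wt_V(D_k) ∏_{i=1}^{k-1} ∏_{p ∈ D_i ∩ D_{i+1}} (1 - w̃t(p)⁻¹)`. -/
def weakSum (wt wte : ℤ × ℕ → F) (n k : ℕ) : F :=
  ∑ D ∈ weakTuples n k,
    (∏ i : Fin k, wtVal wt wte (-(n : ℤ) - 2 * (i : ℕ)) (D i)) *
      ∏ j : Fin (k - 1),
        interProd (fun p => 1 - (wte p)⁻¹) (n + 2 * (j : ℕ)) (n + 2 * ((j : ℕ) + 1))
          (D ⟨(j : ℕ), by have := j.isLt; omega⟩)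
          (D ⟨(j : ℕ) + 1, by have := j.isLt; omega⟩)

/-- The sum over `(D₁ < ⋯ < D_k) ∈ Dyck^k_{2n}` of `wt_V(D₁)⋯wt_V(D_k)`. -/
def strictSum (wt wte : ℤ × ℕ → F) (n k : ℕ) : F :=
  ∑ D ∈ strictTuples n k, ∏ i : Fin k, wtVal wt wte (-(n : ℤ) - 2 * (i : ℕ)) (D i)

end Weights

/-! ### Schröder paths.

A path with `L` steps is encoded by `st : Fin L → Fin 3`
(`0` = up-step `(1,1)`, `1` = down-step `(1,-1)`, `2` = horizontal step `(2,0)`). -/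

/-- The horizontal displacement of the `j`-th step. -/
def stepX {L : ℕ} (st : Fin L → Fin 3) (j : ℕ) : ℕ :=
  if h : j < L then (if st ⟨j, h⟩ = 2 then 2 else 1) else 0

/-- The vertical displacement of the `j`-th step. -/
def stepY {L : ℕ} (st : Fin L → Fin 3) (j : ℕ) : ℤ :=
  if h : j < L then (if st ⟨j, h⟩ = 0 then 1 else if st ⟨j, h⟩ = 1 then -1 else 0) else 0

/-- The horizontal position (relative to the start) after `j` steps. -/
def xpos {L : ℕ} (st : Fin L → Fin 3) (j : ℕ) : ℕ := ∑ t ∈ Finset.range j, stepX st t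

/-- The height after `j` steps. -/
def ypos {L : ℕ} (st : Fin L → Fin 3) (j : ℕ) : ℤ := ∑ t ∈ Finset.range j, stepY st t

/-- A (little) Schröder path of horizontal span `2m`: nonnegative heights, ends at
height `0`, and no horizontal step on the `x`-axis. -/
def IsSch (m : ℕ) {L : ℕ} (st : Fin L → Fin 3) : Prop :=
  xpos st L = 2 * m ∧ (∀ j ∈ Finset.range (L + 1), 0 ≤ ypos st j) ∧ ypos st L = 0 ∧
    ∀ j ∈ Finset.range L, stepX st j = 2 → ypos st j ≠ 0

/-- The height of a Schröder path over the relative abscissa `x` (midpoints of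
horizontal steps get the height of that horizontal step). -/
def schHeight {L : ℕ} (st : Fin L → Fin 3) (x : ℕ) : ℤ :=
  ∑ t ∈ Finset.range L, if xpos st (t + 1) ≤ x then stepY st t else 0

/-- The relative abscissa `x` is the midpoint of a horizontal step. -/
def IsHMid {L : ℕ} (st : Fin L → Fin 3) (x : ℕ) : Prop :=
  ∃ j ∈ Finset.range L, stepX st j = 2 ∧ xpos st j + 1 = x

/-- The number of horizontal steps of a Schröder path. -/
def hsCount {L : ℕ} (st : Fin L → Fin 3) : ℕ :=
  ((Finset.range L).filter fun j => stepX st j = 2).card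

/-- `wt_Sch(c, S) = c^{hs(S)} ∏_{p ∈ S} wt(p)` for a Schröder path starting at `(a,0)`. -/
def wtSch {F : Type*} [Field F] (wt : ℤ × ℕ → F) (c : F) (a : ℤ) {L : ℕ}
    (st : Fin L → Fin 3) : F :=
  c ^ hsCount st * ∏ j ∈ Finset.range (L + 1), wt (a + xpos st j, (ypos st j).toNat)

/-- `φ_V(S) = D`: the Dyck path `D` (with `L'` steps) is obtained from the Schröder
path `S` by replacing each horizontal step by a down-step followed by an up-step. -/
def PhiVEq {L L' : ℕ} (st : Fin L → Fin 3) (s : Fin L' → Bool) : Prop :=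
  ∀ x ∈ Finset.range (L' + 1),
    pht s x = schHeight st x - (if IsHMid st x then 1 else 0)

/-- `φ_HP(S) = D`: the Dyck path `D` is obtained from the Schröder path `S` by
replacing each horizontal step by an up-step followed by a down-step. -/
def PhiHPEq {L L' : ℕ} (st : Fin L → Fin 3) (s : Fin L' → Bool) : Prop :=
  ∀ x ∈ Finset.range (L' + 1),
    pht s x = schHeight st x + (if IsHMid st x then 1 else 0)

/-! ### Young diagrams, excited and pleasant diagrams, reverse plane partitions. -/

/-- The cells (1-based, matrix coordinates) of the staircase `δ_m = (m-1, m-2, …, 1)`. -/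
def deltaCells (m : ℕ) : Finset (ℕ × ℕ) :=
  ((Finset.Icc 1 m) ×ˢ (Finset.Icc 1 m)).filter fun c => c.1 + c.2 ≤ m

/-- An excited move inside the Young diagram `lam`. -/
def ExcitedStep (lam : Finset (ℕ × ℕ)) (D D' : Finset (ℕ × ℕ)) : Prop :=
  ∃ i j : ℕ, (i, j) ∈ D ∧ (i + 1, j) ∉ D ∧ (i, j + 1) ∉ D ∧ (i + 1, j + 1) ∉ D ∧
    (i + 1, j + 1) ∈ lam ∧ D' = insert (i + 1, j + 1) (D.erase (i, j))

/-- `D` is an excited diagram of `lam/mu`. -/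
def IsExcited (lam mu D : Finset (ℕ × ℕ)) : Prop :=
  Relation.ReflTransGen (ExcitedStep lam) mu D

/-- `P` is a pleasant diagram of `lam/mu`: a subset of `lam \ D` for an excited diagram `D`. -/
def IsPleasant (lam mu : Finset (ℕ × ℕ)) (P : Finset (ℕ × ℕ)) : Prop :=
  ∃ D, IsExcited lam mu D ∧ P ⊆ lam \ D

/-- `p(lam/mu)`, the number of pleasant diagrams of `lam/mu`. -/
def pleasantCount (lam mu : Finset (ℕ × ℕ)) : ℕ :=
  Set.ncard {P : Finset (ℕ × ℕ) | IsPleasant lam mu P}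

/-- A reverse plane partition on the skew shape `shape`: a filling by nonnegative
integers (vanishing off the shape) weakly increasing along rows and columns. -/
def IsRPP (shape : Finset (ℕ × ℕ)) (f : ℕ × ℕ → ℕ) : Prop :=
  (∀ c, c ∉ shape → f c = 0) ∧
    (∀ i j : ℕ, (i, j) ∈ shape → (i, j + 1) ∈ shape → f (i, j) ≤ f (i, j + 1)) ∧
    ∀ i j : ℕ, (i, j) ∈ shape → (i + 1, j) ∈ shape → f (i, j) ≤ f (i + 1, j)

/-- `∑_{π ∈ RPP(shape)} q^{|π|}` as a formal power series in `q`. -/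
def rppGF (shape : Finset (ℕ × ℕ)) : PowerSeries ℚ :=
  PowerSeries.mk fun N =>
    (Set.ncard {f : ℕ × ℕ → ℕ | IsRPP shape f ∧ ∑ c ∈ shape, f c = N} : ℚ)

/-- `(q; q)_m = ∏_{i=1}^m (1 - q^i)` as a formal power series. -/
def pochPS (m : ℕ) : PowerSeries ℚ :=
  ∏ i ∈ Finset.Icc 1 m, (1 - (PowerSeries.X : PowerSeries ℚ) ^ i)

/-- `E*_N(q) = ∑_{π ∈ Alt_N} q^{maj(κ_N π⁻¹)}` as a formal power series. -/
def EstarPS (N : ℕ) : PowerSeries ℚ :=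
  ∑ π ∈ altPerms N, (PowerSeries.X : PowerSeries ℚ) ^ majKappaInv N π

/-- `E*_m(q)/(q;q)_m` for `m ≥ 0`, and `0` for `m < 0`. -/
def EstarEntry (m : ℤ) : PowerSeries ℚ :=
  if m < 0 then 0 else EstarPS m.toNat * (pochPS m.toNat)⁻¹

/-- The Gaussian binomial coefficient `[N choose M]_q` as a formal power series. -/
def gaussPS (N M : ℕ) : PowerSeries ℚ :=
  pochPS N * (pochPS M * pochPS (N - M))⁻¹

/-!
Both sides are `(1 - q)^N [N]_q!` times the generating function `Z_N` of the sequences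
`a₁ > a₂ < a₃ > ⋯ > a_{N-1} < a_N` in `ℕ` by sum, where `N = 2n + 1`.

On the left, permute the positions of the sequence by `η` and sort it into weakly decreasing order,
stably. The sequences sorted by a given permutation `u` contribute `q^{maj(u)}` divided by
`(1 - q)^N [N]_q!`, and since `η` has a descent wherever the sequence does, stability makes the
zigzag sequences correspond to the `u = ηπ⁻¹` with `π` alternating.

On the right, split a zigzag sequence at its first `0`, or subtract `1` from every entry if it has
none. This gives a recursion for `Z_N`. By the `q`-binomial theorem it is the one obtained by
splitting an alternating permutation `σ m τ` at its maximum `m`, where `τ` corresponds to the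
entries before the first `0` and `σ` to those after it: the `|τ|` inversions of `m` match the `1`s
subtracted from the former, and `m` increases the number of non-ascents of `π_e` only if `|σ| = 1`,
which is also the only case in which the condition that no `0` follow a `0` restricts the latter.

It is enough to compare the two sides at the real numbers `0 < q < 1`. Evaluating them in `[0, ∞]`
spares all questions of convergence.
-/

/-! ### The `q`-binomial theorem -/

section QBinomial

variable {R : Type*} [CommSemiring R]

/-- The `q`-integer `[n]_q = 1 + q + ⋯ + q^(n-1)`. Unlike `(1 - q^n) / (1 - q)`, this makes sense
over a semiring. -/
def qNumber (q : R) (n : ℕ) : R := ∑ i ∈ range n, q ^ i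

/-- The `q`-factorial `[n]_q! = [1]_q [2]_q ⋯ [n]_q`. -/
def qFactorial (q : R) (n : ℕ) : R := ∏ i ∈ range n, qNumber q (i + 1)

theorem qNumber_add (q : R) (a b : ℕ) :
    qNumber q (a + b) = qNumber q a + q ^ a * qNumber q b := by
  simp only [qNumber, Finset.sum_range_add, pow_add, Finset.mul_sum]

theorem qFactorial_zero (q : R) : qFactorial q 0 = 1 := Finset.prod_range_zero _

theorem qFactorial_succ (q : R) (n : ℕ) :
    qFactorial q (n + 1) = qFactorial q n * qNumber q (n + 1) :=
  Finset.prod_range_succ _ _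

end QBinomial

section CrossInv

variable {α : Type*} [LinearOrder α]

/-- The number of inversions between a block of entries `T` and a block `U` to its right. -/
def crossInv (T U : Finset α) : ℕ := ∑ a ∈ T, #{b ∈ U | b < a}

theorem crossInv_empty_left (U : Finset α) : crossInv ∅ U = 0 := Finset.sum_empty

theorem crossInv_empty_right (T : Finset α) : crossInv T ∅ = 0 := by simp [crossInv]

theorem crossInv_insert_left {T U : Finset α} {m : α} (hT : m ∉ T) (hU : ∀ x ∈ U, x < m) :
    crossInv (insert m T) U = #U + crossInv T U := by
  rw [crossInv, Finset.sum_insert hT, Finset.filter_true_of_mem hU, crossInv]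

theorem crossInv_insert_right {T U : Finset α} {m : α} (hT : ∀ x ∈ T, x < m) :
    crossInv T (insert m U) = crossInv T U :=
  Finset.sum_congr rfl fun a ha => by rw [Finset.filter_insert, if_neg (hT a ha).not_gt]

theorem sum_powersetCard_succ_insert {β M : Type*} [DecidableEq β] [AddCommMonoid M]
    {S : Finset β} {m : β} (hm : m ∉ S) (n : ℕ) (f : Finset β → M) :
    ∑ T ∈ (insert m S).powersetCard (n + 1), f T =
      ∑ T ∈ S.powersetCard (n + 1), f T + ∑ T ∈ S.powersetCard n, f (insert m T) := by
  have hmT {k : ℕ} {T : Finset β} (hT : T ∈ S.powersetCard k) : m ∉ T :=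
    fun h => hm ((Finset.mem_powersetCard.1 hT).1 h)
  rw [Finset.powersetCard_succ_insert hm, Finset.sum_union, Finset.sum_image]
  · intro T hT T' hT' h
    rw [← Finset.erase_insert (hmT hT), h, Finset.erase_insert (hmT hT')]
  · rw [Finset.disjoint_right]
    intro T hT hT'
    obtain ⟨U, -, rfl⟩ := Finset.mem_image.1 hT
    exact hmT hT' (Finset.mem_insert_self m U)

variable {R : Type*} [CommSemiring R]

theorem sum_powersetCard_insert_pow_crossInv (q : R) {S : Finset α} {m : α}
    (hm : ∀ x ∈ S, x < m) (a : ℕ) :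
    ∑ T ∈ (insert m S).powersetCard (a + 1), q ^ crossInv (insert m S \ T) T =
      q ^ (a + 1) * ∑ T ∈ S.powersetCard (a + 1), q ^ crossInv (S \ T) T +
        ∑ T ∈ S.powersetCard a, q ^ crossInv (S \ T) T := by
  have hmS : m ∉ S := fun h => (hm m h).false
  rw [sum_powersetCard_succ_insert hmS, Finset.mul_sum]
  congr 1 <;> refine Finset.sum_congr rfl fun T hT => ?_ <;>
    obtain ⟨hTS, hTa⟩ := Finset.mem_powersetCard.1 hT
  · rw [Finset.insert_sdiff_of_notMem _ fun h => hmS (hTS h),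
      crossInv_insert_left (fun h => hmS (Finset.sdiff_subset h)) fun x hx => hm x (hTS hx), hTa,
      pow_add]
  · rw [Finset.insert_sdiff_insert, Finset.sdiff_insert_of_notMem hmS,
      crossInv_insert_right fun x hx => hm x (Finset.sdiff_subset hx)]

theorem sum_powersetCard_pow_crossInv_mul (q : R) (S : Finset α) {a b : ℕ} (hab : a + b = #S) :
    (∑ T ∈ S.powersetCard a, q ^ crossInv (S \ T) T) * (qFactorial q a * qFactorial q b) =
      qFactorial q #S := by
  induction S using Finset.induction_on_max generalizing a b with
  | empty =>
    obtain ⟨rfl, rfl⟩ : a = 0 ∧ b = 0 := by simpa using hab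
    simp [crossInv_empty_left, qFactorial_zero]
  | insert m S hm ih =>
    rcases a with _ | a
    · obtain rfl : b = #(insert m S) := by omega
      simp [crossInv_empty_right, qFactorial_zero]
    rcases b with _ | b
    · obtain ha : a + 1 = #(insert m S) := by omega
      simp [ha, crossInv_empty_left, qFactorial_zero]
    rw [Finset.card_insert_of_notMem fun h => (hm m h).false] at hab ⊢
    have ih₁ := ih (a := a + 1) (b := b) (by omega)
    have ih₂ := ih (a := a) (b := b + 1) (by omega)
    have hc : #S + 1 = a + 1 + (b + 1) := by omega
    rw [sum_powersetCard_insert_pow_crossInv q hm]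
    set A := ∑ T ∈ S.powersetCard (a + 1), q ^ crossInv (S \ T) T
    set B := ∑ T ∈ S.powersetCard a, q ^ crossInv (S \ T) T
    calc (q ^ (a + 1) * A + B) * (qFactorial q (a + 1) * qFactorial q (b + 1))
        = B * (qFactorial q a * qFactorial q (b + 1)) * qNumber q (a + 1) +
            A * (qFactorial q (a + 1) * qFactorial q b) * (q ^ (a + 1) * qNumber q (b + 1)) := by
          rw [qFactorial_succ q a, qFactorial_succ q b]
          ring
      _ = qFactorial q #S * qNumber q (a + 1 + (b + 1)) := by
          rw [ih₁, ih₂, qNumber_add q (a + 1), mul_add]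
      _ = qFactorial q (#S + 1) := by rw [qFactorial_succ, hc]

end CrossInv

/-! ### Zigzag lists -/

section Zigzag

variable {α β : Type*} {r : α → α → Prop}

/-- A list `[a₁, …, a_k]` is zigzag for `r` if `k` is odd and every entry in an even position is
`r`-related to its two neighbours. In particular `[]` is not zigzag. For `r = (· > ·)` these are
the alternating words of odd length. -/
def Zigzag (r : α → α → Prop) : List α → Prop
  | [] => False
  | [_] => True
  | [_, _] => False
  | a :: b :: c :: l => r b a ∧ r b c ∧ Zigzag r (c :: l)

theorem zigzag_append_cons [Std.Asymm r] {m : α} {τ : List α} (hτ : ∀ x ∈ τ, ¬ r x m) :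
    ∀ {σ : List α}, (∀ x ∈ σ, r m x) →
      (Zigzag r (σ ++ m :: τ) ↔
        σ = [] ∧ τ = [] ∨ Zigzag r σ ∧ Zigzag r τ ∧ ∀ x ∈ τ.head?, r m x)
  | [], _ => by
    rcases τ with _ | ⟨a, _ | ⟨b, τ⟩⟩ <;> simp_all [Zigzag]
  | [a], h => by
    rcases τ with _ | ⟨b, τ⟩
    · simp [Zigzag]
    · have hma : r m a := h a (by simp)
      simp [Zigzag, hma, and_comm]
  | [a, b], h => by
    have hbm : ¬ r b m := Std.Asymm.asymm _ _ (h b (by simp))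
    simp [Zigzag, hbm]
  | a :: b :: c :: σ, h => by
    have ih := zigzag_append_cons hτ (σ := c :: σ) fun x hx => h x (by simp_all)
    simp only [List.cons_append, Zigzag, reduceCtorEq, false_and, false_or] at ih ⊢
    rw [ih, and_assoc, and_assoc]

theorem zigzag_map {s : β → β → Prop} {f : α → β} (h : ∀ a b, s (f a) (f b) ↔ r a b) :
    ∀ {l : List α}, Zigzag s (l.map f) ↔ Zigzag r l
  | [] => Iff.rfl
  | [_] => Iff.rfl
  | [_, _] => Iff.rfl
  | _ :: b :: c :: l => and_congr (h b _) (and_congr (h b c) (zigzag_map h (l := c :: l)))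

theorem zigzag_iff_getElem : ∀ {l : List α}, Zigzag r l ↔
    l.length % 2 = 1 ∧ ∀ i (h : i + 1 < l.length),
      (i % 2 = 0 → r l[i + 1] l[i]) ∧ (i % 2 = 1 → r l[i] l[i + 1])
  | [] => by simp [Zigzag]
  | [_] => by simp [Zigzag]
  | [_, _] => by simp [Zigzag]
  | a :: b :: c :: l => by
    rw [Zigzag, zigzag_iff_getElem]
    constructor
    · rintro ⟨hab, hbc, hl, hr⟩
      refine ⟨by simp only [List.length_cons] at hl ⊢; omega, ?_⟩
      rintro (_ | _ | i) hi
      · simpa using hab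
      · simpa using hbc
      · simp only [Nat.add_assoc i 1 1, Nat.add_mod_right]
        exact hr i (by simpa using hi)
    · rintro ⟨hl, hr⟩
      refine ⟨by simpa using hr 0, by simpa using hr 1,
        by simp only [List.length_cons] at hl ⊢; omega, fun i hi => ?_⟩
      rw [← Nat.add_mod_right i 2]
      exact hr (i + 2) (by simpa using hi)

theorem zigzag_ofFn_iff {N : ℕ} (hN : N % 2 = 1) (f : Fin N → α) :
    Zigzag r (List.ofFn f) ↔ ∀ i (h : i + 1 < N),
      (i % 2 = 0 → r (f ⟨i + 1, h⟩) (f ⟨i, by omega⟩)) ∧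
      (i % 2 = 1 → r (f ⟨i, by omega⟩) (f ⟨i + 1, h⟩)) := by
  simp [zigzag_iff_getElem, hN]

theorem append_cons_injOn (m : α) :
    Set.InjOn (fun p : List α × List α => p.1 ++ m :: p.2) {p | m ∉ p.1} := by
  rintro ⟨σ, τ⟩ hσ ⟨σ', τ'⟩ hσ' h
  induction σ generalizing σ' with
  | nil =>
    rcases σ' with _ | ⟨a, σ'⟩
    · simpa using h
    · exact absurd (List.mem_cons.2 (Or.inl (List.cons.inj h).1)) hσ'
  | cons a σ ih =>
    rcases σ' with _ | ⟨b, σ'⟩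
    · exact absurd (List.mem_cons.2 (Or.inl (List.cons.inj h).1.symm)) hσ
    · obtain ⟨rfl, h⟩ := List.cons.inj h
      obtain ⟨rfl, rfl⟩ := Prod.mk.inj
        (ih (fun hm => hσ (List.mem_cons_of_mem a hm)) σ'
          (fun hm => hσ' (List.mem_cons_of_mem a hm)) h)
      rfl

end Zigzag

/-! ### Inversions and non-ascents of lists -/

section Statistics

variable {α : Type*}

/-- The list of the entries of a list in even positions, counting from `1`. -/
def evens : List α → List α
  | [] => []
  | [_] => []
  | _ :: b :: l => b :: evens l

theorem mem_of_mem_evens {x : α} : ∀ {l : List α}, x ∈ evens l → x ∈ l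
  | [], h => h
  | [_], h => absurd h List.not_mem_nil
  | _ :: _ :: _, h => by
    rcases List.mem_cons.1 h with rfl | h
    · simp
    · simp [mem_of_mem_evens h]

theorem Zigzag.evens_append_cons {r : α → α → Prop} (m : α) (τ : List α) :
    ∀ {σ : List α}, Zigzag r σ → evens (σ ++ m :: τ) = evens σ ++ m :: evens τ
  | [_], _ => rfl
  | _ :: b :: _ :: _, h => congrArg (b :: ·) (Zigzag.evens_append_cons m τ h.2.2)

theorem Zigzag.evens_eq_nil_iff {r : α → α → Prop} :
    ∀ {σ : List α}, Zigzag r σ → (evens σ = [] ↔ σ.length = 1)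
  | [_], _ => by simp [evens]
  | _ :: _ :: _ :: _, _ => by simp [evens]

variable [LinearOrder α]

/-- The number of inversions of a list. -/
def listInv : List α → ℕ
  | [] => 0
  | a :: l => l.countP (· < a) + listInv l

/-- The number of non-ascents of a list, the last index being a non-ascent. -/
def listNasc : List α → ℕ
  | [] => 0
  | [_] => 1
  | a :: b :: l => (if a < b then 0 else 1) + listNasc (b :: l)

/-- The statistic `inv(π) + nasc(π_e)` on lists. -/
def altWeight (l : List α) : ℕ := listInv l + listNasc (evens l)

theorem listInv_append (σ τ : List α) : listInv (σ ++ τ) =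
    listInv σ + listInv τ + (σ.map fun a => τ.countP (· < a)).sum := by
  induction σ with
  | nil => simp [listInv]
  | cons a σ ih =>
    simp only [List.cons_append, listInv, ih, List.countP_append, List.map_cons, List.sum_cons]
    ring

theorem countP_lt_eq_card {τ : List α} (hτ : τ.Nodup) (a : α) :
    τ.countP (· < a) = #{b ∈ τ.toFinset | b < a} := by
  rw [List.countP_eq_length_filter, ← List.toFinset_card_of_nodup (hτ.filter _),
    List.toFinset_filter]
  simp only [decide_eq_true_eq]

theorem listInv_append_cons {σ τ : List α} {m : α} (hσ : σ.Nodup) (hτ : τ.Nodup)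
    (hσm : ∀ x ∈ σ, x < m) (hτm : ∀ x ∈ τ, x < m) :
    listInv (σ ++ m :: τ) =
      listInv σ + listInv τ + τ.length + crossInv σ.toFinset τ.toFinset := by
  have hm : τ.countP (· < m) = τ.length := List.countP_eq_length.2 (by simpa using hτm)
  have hcross : (σ.map fun a => (m :: τ).countP (· < a)).sum =
      crossInv σ.toFinset τ.toFinset := by
    rw [crossInv, List.sum_toFinset _ hσ]
    refine congrArg _ (List.map_congr_left fun a ha => ?_)
    rw [← countP_lt_eq_card hτ, List.countP_cons_of_neg]
    simpa using (hσm a ha).le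
  rw [listInv_append, hcross, listInv, hm]
  ring

theorem listNasc_append_cons {τ : List α} {m : α} (hτm : ∀ x ∈ τ, x < m) :
    ∀ {σ : List α}, (∀ x ∈ σ, x < m) →
      listNasc (σ ++ m :: τ) = listNasc σ + listNasc τ + if σ = [] then 1 else 0
  | [], _ => by
    rcases τ with _ | ⟨b, τ⟩
    · simp [listNasc]
    · have hbm := hτm b (by simp)
      simp [listNasc, hbm.not_gt, add_comm]
  | [a], h => by
    have ham := h a (by simp)
    have ih := listNasc_append_cons hτm (σ := []) (by simp)
    simp only [List.nil_append, listNasc, if_true, List.cons_append, ham, List.cons_ne_nil,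
      if_false] at ih ⊢
    omega
  | a :: b :: σ, h => by
    have ih := listNasc_append_cons hτm (σ := b :: σ) fun x hx => h x (by simp_all)
    simp only [List.cons_append, listNasc, List.cons_ne_nil, if_false] at ih ⊢
    omega

theorem altWeight_append_cons {σ τ : List α} {m : α} (hσ : σ.Nodup) (hτ : τ.Nodup)
    (hσm : ∀ x ∈ σ, x < m) (hτm : ∀ x ∈ τ, x < m) (hσz : Zigzag (· > ·) σ) :
    altWeight (σ ++ m :: τ) =
      (crossInv σ.toFinset τ.toFinset + (#τ.toFinset + if #σ.toFinset = 1 then 1 else 0)) +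
        (altWeight σ + altWeight τ) := by
  rw [altWeight, listInv_append_cons hσ hτ hσm hτm, hσz.evens_append_cons,
    listNasc_append_cons (fun x hx => hτm x (mem_of_mem_evens hx))
      (fun x hx => hσm x (mem_of_mem_evens hx)),
    List.toFinset_card_of_nodup hσ, List.toFinset_card_of_nodup hτ, altWeight, altWeight]
  simp only [hσz.evens_eq_nil_iff]
  ring

end Statistics

/-! ### Alternating arrangements of a finite set -/

section Alternating

variable {α : Type*} [LinearOrder α] {S T : Finset α} {m : α} {l σ τ : List α}

/-- The alternating arrangements `a₁ < a₂ > a₃ < ⋯` of odd length of a finite set. There are none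
if the set has even cardinality. -/
def altLists (S : Finset α) : Finset (List α) :=
  Finset.filter (Zigzag (· > ·)) ⟨S.val.lists, Multiset.lists_nodup_finset S⟩

theorem mem_altLists : l ∈ altLists S ↔ S.val = l ∧ Zigzag (· > ·) l := by
  rw [altLists, Finset.mem_filter, Finset.mem_mk, Multiset.mem_lists_iff, Multiset.quot_mk_to_coe]

theorem nodup_of_mem_altLists (hl : l ∈ altLists S) : l.Nodup := by
  rw [← Multiset.coe_nodup, ← (mem_altLists.1 hl).1]
  exact S.nodup

theorem toFinset_eq_of_mem_altLists (hl : l ∈ altLists S) : l.toFinset = S := by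
  rw [List.toFinset, ← (mem_altLists.1 hl).1, Finset.val_toFinset]

theorem mem_of_mem_altLists (hl : l ∈ altLists S) {x : α} (hx : x ∈ l) : x ∈ S :=
  toFinset_eq_of_mem_altLists hl ▸ List.mem_toFinset.2 hx

theorem altLists_empty : altLists (∅ : Finset α) = ∅ := by
  refine Finset.eq_empty_of_forall_notMem fun l hl => ?_
  obtain ⟨hS, hz⟩ := mem_altLists.1 hl
  obtain rfl : l = [] := Multiset.coe_eq_zero l |>.1 hS.symm
  exact hz

theorem altLists_singleton (a : α) : altLists {a} = {[a]} := by
  ext l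
  rw [mem_altLists, Finset.singleton_val, eq_comm, Multiset.coe_eq_singleton,
    Finset.mem_singleton, and_iff_left_of_imp]
  rintro rfl
  trivial

theorem insert_val_eq_append_cons_iff (hm : m ∉ S) :
    (insert m S).val = (σ ++ m :: τ : List α) ↔ S.val = σ + τ := by
  rw [Finset.insert_val_of_notMem hm, Multiset.coe_eq_coe.2 List.perm_middle,
    ← Multiset.cons_coe, Multiset.cons_inj_right, Multiset.coe_add]

theorem append_cons_mem_altLists_insert (hm : ∀ x ∈ S, x < m) (hTS : T ⊆ S)
    (hσ : σ ∈ altLists (S \ T)) (hτ : τ ∈ altLists T) :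
    σ ++ m :: τ ∈ altLists (insert m S) := by
  have hσm : ∀ x ∈ σ, x < m := fun x hx => hm x (Finset.sdiff_subset (mem_of_mem_altLists hσ hx))
  have hτm : ∀ x ∈ τ, x < m := fun x hx => hm x (hTS (mem_of_mem_altLists hτ hx))
  rw [mem_altLists] at hσ hτ
  rw [mem_altLists, insert_val_eq_append_cons_iff fun h => (hm m h).false,
    zigzag_append_cons (fun x hx => (hτm x hx).not_gt) hσm]
  refine ⟨?_, Or.inr ⟨hσ.2, hτ.2, fun x hx => hτm x (List.mem_of_mem_head? hx)⟩⟩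
  rw [← hσ.1, ← hτ.1, Finset.sdiff_val, tsub_add_cancel_of_le (Finset.val_le_iff.2 hTS)]

theorem exists_append_cons_of_mem_altLists_insert (hm : ∀ x ∈ S, x < m) (hS : S.Nonempty)
    (hl : l ∈ altLists (insert m S)) :
    ∃ T ⊆ S, ∃ σ ∈ altLists (S \ T), ∃ τ ∈ altLists T, σ ++ m :: τ = l := by
  have hml : m ∈ l := List.mem_toFinset.1 <|
    toFinset_eq_of_mem_altLists hl ▸ Finset.mem_insert_self m S
  obtain ⟨σ, τ, rfl⟩ := List.append_of_mem hml
  obtain ⟨hval, hz⟩ := mem_altLists.1 hl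
  rw [insert_val_eq_append_cons_iff fun h => (hm m h).false] at hval
  have hστ : ∀ x, x ∈ σ ∨ x ∈ τ → x < m := fun x hx => hm x <| by
    rw [← Finset.mem_val, hval]
    simpa using hx
  rw [zigzag_append_cons (fun x hx => (hστ x (Or.inr hx)).not_gt)
    fun x hx => hστ x (Or.inl hx)] at hz
  rcases hz with ⟨rfl, rfl⟩ | ⟨hσ, hτ, -⟩
  · exact absurd (Finset.val_eq_zero.1 hval) hS.ne_empty
  have hτS : (τ : Multiset α) ≤ S.val := hval ▸ Multiset.le_add_left _ _
  let T : Finset α := ⟨τ, Multiset.nodup_of_le hτS S.nodup⟩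
  have hT : (S \ T).val = σ := by
    rw [Finset.sdiff_val, hval, add_tsub_cancel_right]
  exact ⟨T, Finset.val_le_iff.1 hτS, σ, mem_altLists.2 ⟨hT, hσ⟩, τ, mem_altLists.2 ⟨rfl, hτ⟩, rfl⟩

theorem sum_altLists_insert {M : Type*} [AddCommMonoid M] (hm : ∀ x ∈ S, x < m)
    (hS : S.Nonempty) (f : List α → M) :
    ∑ l ∈ altLists (insert m S), f l =
      ∑ T ∈ S.powerset, ∑ σ ∈ altLists (S \ T), ∑ τ ∈ altLists T, f (σ ++ m :: τ) := by
  simp only [← Finset.sum_product', Finset.sum_sigma']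
  symm
  refine Finset.sum_nbij (fun p => p.2.1 ++ m :: p.2.2) ?_ ?_ ?_ fun _ _ => rfl
  · rintro ⟨T, σ, τ⟩ h
    simp only [Finset.mem_sigma, Finset.mem_powerset, Finset.mem_product] at h
    exact append_cons_mem_altLists_insert hm h.1 h.2.1 h.2.2
  · rintro ⟨T, σ, τ⟩ h ⟨T', σ', τ'⟩ h' heq
    simp only [Finset.mem_coe, Finset.mem_sigma, Finset.mem_powerset, Finset.mem_product] at h h'
    have hmσ {T : Finset α} {σ : List α} (hσ : σ ∈ altLists (S \ T)) : m ∉ σ := fun hmσ =>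
      (hm m (Finset.sdiff_subset (mem_of_mem_altLists hσ hmσ))).false
    obtain ⟨rfl, rfl⟩ := Prod.mk.inj (append_cons_injOn m (hmσ h.2.1) (hmσ h'.2.1) heq)
    obtain rfl : T = T' := (toFinset_eq_of_mem_altLists h.2.2).symm.trans
      (toFinset_eq_of_mem_altLists h'.2.2)
    rfl
  · intro l hl
    obtain ⟨T, hTS, σ, hσ, τ, hτ, rfl⟩ := exists_append_cons_of_mem_altLists_insert hm hS hl
    exact ⟨⟨T, σ, τ⟩, by simp [hTS, hσ, hτ], rfl⟩

variable {R : Type*} [CommSemiring R]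

/-- The generating function by `altWeight` of the alternating arrangements of a finite set. -/
def altGF (q : R) (S : Finset α) : R := ∑ l ∈ altLists S, q ^ altWeight l

theorem altGF_empty (q : R) : altGF q (∅ : Finset α) = 0 := by
  rw [altGF, altLists_empty, Finset.sum_empty]

theorem altGF_singleton (q : R) (a : α) : altGF q {a} = 1 := by
  rw [altGF, altLists_singleton, Finset.sum_singleton]
  exact pow_zero q

theorem altGF_insert (q : R) (hm : ∀ x ∈ S, x < m) (hS : S.Nonempty) :
    altGF q (insert m S) = ∑ T ∈ S.powerset, q ^ crossInv (S \ T) T *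
      (q ^ (#T + if #(S \ T) = 1 then 1 else 0) * (altGF q T * altGF q (S \ T))) := by
  rw [altGF, sum_altLists_insert hm hS]
  refine Finset.sum_congr rfl fun T hT => ?_
  rw [altGF, altGF, mul_comm (∑ _ ∈ _, _), Finset.sum_mul_sum, Finset.mul_sum, Finset.mul_sum]
  refine Finset.sum_congr rfl fun σ hσ => ?_
  rw [Finset.mul_sum, Finset.mul_sum]
  refine Finset.sum_congr rfl fun τ hτ => ?_
  have hσm : ∀ x ∈ σ, x < m := fun x hx => hm x (Finset.sdiff_subset (mem_of_mem_altLists hσ hx))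
  have hτm : ∀ x ∈ τ, x < m := fun x hx =>
    hm x (Finset.mem_powerset.1 hT (mem_of_mem_altLists hτ hx))
  rw [altWeight_append_cons (nodup_of_mem_altLists hσ) (nodup_of_mem_altLists hτ) hσm hτm
    (mem_altLists.1 hσ).2, toFinset_eq_of_mem_altLists hσ, toFinset_eq_of_mem_altLists hτ, pow_add,
    pow_add, pow_add q (altWeight σ), mul_assoc]

theorem sum_powerset_pow_crossInv_mul (q : R) (S : Finset α) (c : ℕ → ℕ → R) :
    ∑ T ∈ S.powerset, q ^ crossInv (S \ T) T *
        (qFactorial q #T * qFactorial q #(S \ T) * c #T #(S \ T)) =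
      qFactorial q #S * ∑ p ∈ antidiagonal #S, c p.1 p.2 := by
  rw [Finset.sum_powerset, Finset.Nat.sum_antidiagonal_eq_sum_range_succ c, Finset.mul_sum]
  refine Finset.sum_congr rfl fun a ha => ?_
  have hab : a + (#S - a) = #S := by
    rw [Finset.mem_range] at ha
    omega
  rw [← sum_powersetCard_pow_crossInv_mul q S hab, mul_assoc, Finset.sum_mul]
  refine Finset.sum_congr rfl fun T hT => ?_
  obtain ⟨hTS, rfl⟩ := Finset.mem_powersetCard.1 hT
  rw [Finset.card_sdiff_of_subset hTS]

theorem altGF_eq_qFactorial_mul {q : R} {z : ℕ → R} (hz₀ : z 0 = 0) (hz₁ : z 1 = 1)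
    (hz : ∀ M ≠ 0, qNumber q (M + 1) * z (M + 1) =
      ∑ p ∈ antidiagonal M, q ^ (p.1 + if p.2 = 1 then 1 else 0) * (z p.1 * z p.2))
    (S : Finset α) : altGF q S = qFactorial q #S * z #S := by
  induction S using Finset.strongInduction with | H S ih => ?_
  induction S using Finset.induction_on_max with
  | empty => rw [altGF_empty, Finset.card_empty, hz₀, mul_zero]
  | insert m U hm _ =>
    have hmU : m ∉ U := fun h => (hm m h).false
    obtain rfl | hU := U.eq_empty_or_nonempty
    · simp [altGF_singleton, hz₁, qFactorial, qNumber]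
    have ih' {T : Finset α} (hT : T ⊆ U) : altGF q T = qFactorial q #T * z #T :=
      ih T (hT.trans_ssubset (Finset.ssubset_insert hmU))
    rw [Finset.card_insert_of_notMem hmU, qFactorial_succ, mul_assoc, hz _ hU.card_pos.ne',
      ← sum_powerset_pow_crossInv_mul q U fun a b =>
        q ^ (a + if b = 1 then 1 else 0) * (z a * z b), altGF_insert q hm hU]
    refine Finset.sum_congr rfl fun T hT => ?_
    rw [ih' (Finset.mem_powerset.1 hT), ih' Finset.sdiff_subset]
    ring

end Alternating

/-! ### Zigzag sequences of natural numbers -/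

section ZigzagSequences

/-- The generating function by sum of a set of words in `ℕ`. -/
def sumGF (q : ENNReal) (A : Set (List ℕ)) : ENNReal := ∑' l : A, q ^ (l : List ℕ).sum

/-- The words `a₁ > a₂ < a₃ > ⋯` of length `N` in `ℕ`; there are none if `N` is even. -/
def zigzagWords (N : ℕ) : Set (List ℕ) := {l | l.length = N ∧ Zigzag (· < ·) l}

/-- The generating function of zigzag words by sum. -/
def zigzagGF (q : ENNReal) (N : ℕ) : ENNReal := sumGF q (zigzagWords N)

theorem sumGF_union (q : ENNReal) {A B : Set (List ℕ)} (h : Disjoint A B) :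
    sumGF q (A ∪ B) = sumGF q A + sumGF q B :=
  ENNReal.summable.tsum_union_disjoint (f := fun l : List ℕ => q ^ l.sum) h ENNReal.summable

theorem sumGF_biUnion (q : ENNReal) {ι : Type*} (s : Finset ι) {A : ι → Set (List ℕ)}
    (h : (s : Set ι).PairwiseDisjoint A) : sumGF q (⋃ i ∈ s, A i) = ∑ i ∈ s, sumGF q (A i) :=
  (ENNReal.tsum_biUnion' (f := fun l : List ℕ => q ^ l.sum) h).trans
    (Finset.tsum_subtype s fun i => sumGF q (A i))

theorem sumGF_image_map_succ (q : ENNReal) {A : Set (List ℕ)} {N : ℕ}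
    (hA : ∀ l ∈ A, l.length = N) : sumGF q (List.map Nat.succ '' A) = q ^ N * sumGF q A := by
  rw [sumGF, tsum_image (fun l : List ℕ => q ^ l.sum)
    (List.map_injective_iff.2 Nat.succ_injective).injOn, sumGF, ← ENNReal.tsum_mul_left]
  have hsum (l : List ℕ) : (l.map Nat.succ).sum = l.length + l.sum := by
    induction l with
    | nil => rfl
    | cons a l ih =>
      rw [List.map_cons, List.sum_cons, List.sum_cons, List.length_cons, ih]
      omega
  exact tsum_congr fun l => by rw [hsum, hA l l.2, pow_add]

theorem sumGF_image2_append_cons (q : ENNReal) {A B : Set (List ℕ)} (hA : ∀ l ∈ A, 0 ∉ l) :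
    sumGF q (Set.image2 (fun σ τ => σ ++ 0 :: τ) A B) = sumGF q A * sumGF q B := by
  have hinj : Set.InjOn (fun p : List ℕ × List ℕ => p.1 ++ 0 :: p.2) (A ×ˢ B) :=
    (append_cons_injOn 0).mono fun p hp => hA p.1 hp.1
  rw [← Set.image_prod, sumGF, tsum_image (fun l : List ℕ => q ^ l.sum) hinj,
    ← (Equiv.Set.prod A B).symm.tsum_eq, ENNReal.tsum_prod', sumGF, ← ENNReal.tsum_mul_right]
  refine tsum_congr fun σ => ?_
  rw [sumGF, ← ENNReal.tsum_mul_left]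
  refine tsum_congr fun τ => ?_
  change q ^ ((σ : List ℕ) ++ 0 :: (τ : List ℕ)).sum = _
  rw [List.sum_append, List.sum_cons, zero_add, pow_add]

theorem image_map_succ_zigzagWords (N : ℕ) :
    List.map Nat.succ '' zigzagWords N = {l ∈ zigzagWords N | 0 ∉ l} := by
  ext l
  constructor
  · rintro ⟨l, ⟨hl, hz⟩, rfl⟩
    exact ⟨⟨by simpa using hl, (zigzag_map fun _ _ => Nat.succ_lt_succ_iff).2 hz⟩, by simp⟩
  · rintro ⟨⟨hl, hz⟩, h₀⟩
    have hpred : (l.map Nat.pred).map Nat.succ = l := by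
      rw [List.map_map]
      refine (List.map_congr_left fun a ha => ?_).trans (List.map_id l)
      exact Nat.succ_pred_eq_of_ne_zero fun h => h₀ (h ▸ ha)
    rw [← hpred] at hz
    exact ⟨l.map Nat.pred, ⟨by simpa using hl,
      (zigzag_map fun _ _ => Nat.succ_lt_succ_iff).1 hz⟩, hpred⟩

theorem sumGF_zigzagWords_notMem_zero (q : ENNReal) (N : ℕ) :
    sumGF q {l ∈ zigzagWords N | 0 ∉ l} = q ^ N * zigzagGF q N := by
  rw [← image_map_succ_zigzagWords, sumGF_image_map_succ q fun l hl => hl.1, zigzagGF]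

theorem sumGF_zigzagWords_head_pos (q : ENNReal) (N : ℕ) :
    sumGF q {l ∈ zigzagWords N | ∀ x ∈ l.head?, 0 < x} =
      q ^ (if N = 1 then 1 else 0) * zigzagGF q N := by
  by_cases hN : N = 1
  · subst hN
    rw [if_pos rfl, ← sumGF_zigzagWords_notMem_zero]
    congr 1
    ext l
    refine and_congr_right fun hl => ?_
    obtain ⟨a, rfl⟩ := List.length_eq_one_iff.1 hl.1
    simp [Nat.pos_iff_ne_zero, eq_comm]
  · rw [if_neg hN, pow_zero, one_mul, zigzagGF]
    congr 1
    refine Set.sep_eq_self_iff_mem_true.2 fun l hl => ?_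
    obtain ⟨hl, hz⟩ := hl
    rcases l with _ | ⟨a, _ | ⟨b, _ | ⟨c, l⟩⟩⟩
    · exact hz.elim
    · exact absurd hl.symm hN
    · exact hz.elim
    · simpa using Nat.zero_lt_of_lt hz.1

theorem append_cons_mem_zigzagWords_succ {M : ℕ} (hM : M ≠ 0) {σ τ : List ℕ} (hσ : 0 ∉ σ) :
    σ ++ 0 :: τ ∈ zigzagWords (M + 1) ↔ σ.length + τ.length = M ∧
      Zigzag (· < ·) σ ∧ Zigzag (· < ·) τ ∧ ∀ x ∈ τ.head?, 0 < x := by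
  have hlen : (σ ++ 0 :: τ).length = M + 1 ↔ σ.length + τ.length = M := by
    rw [List.length_append, List.length_cons, ← add_assoc, Nat.add_right_cancel_iff]
  rw [zigzagWords, Set.mem_ofPred_eq, hlen, zigzag_append_cons (fun x _ => Nat.not_lt_zero x)
    fun x hx => Nat.pos_of_ne_zero fun h => hσ (h ▸ hx)]
  refine and_congr_right fun h => or_iff_right ?_
  rintro ⟨rfl, rfl⟩
  exact hM h.symm

theorem zigzagWords_succ {M : ℕ} (hM : M ≠ 0) :
    zigzagWords (M + 1) = {l ∈ zigzagWords (M + 1) | 0 ∉ l} ∪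
      ⋃ p ∈ antidiagonal M, Set.image2 (fun σ τ => σ ++ 0 :: τ)
        {l ∈ zigzagWords p.1 | 0 ∉ l} {l ∈ zigzagWords p.2 | ∀ x ∈ l.head?, 0 < x} := by
  refine Set.Subset.antisymm (fun l hl => ?_) (Set.union_subset (Set.sep_subset _ _) ?_)
  · by_cases h₀ : 0 ∈ l
    · obtain ⟨σ, τ, rfl, hσ⟩ := List.eq_append_cons_of_mem h₀
      obtain ⟨hM, hσz, hτz, hτ⟩ := (append_cons_mem_zigzagWords_succ hM hσ).1 hl
      exact Or.inr <| Set.mem_iUnion₂.2 ⟨(σ.length, τ.length), mem_antidiagonal.2 hM,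
        σ, ⟨⟨rfl, hσz⟩, hσ⟩, τ, ⟨⟨rfl, hτz⟩, hτ⟩, rfl⟩
    · exact Or.inl ⟨hl, h₀⟩
  · refine Set.iUnion₂_subset ?_
    rintro ⟨a, b⟩ hab _ ⟨σ, ⟨⟨rfl, hσz⟩, hσ⟩, τ, ⟨⟨rfl, hτz⟩, hτ⟩, rfl⟩
    exact (append_cons_mem_zigzagWords_succ hM hσ).2 ⟨mem_antidiagonal.1 hab, hσz, hτz, hτ⟩

theorem zigzagGF_succ (q : ENNReal) {M : ℕ} (hM : M ≠ 0) :
    zigzagGF q (M + 1) = q ^ (M + 1) * zigzagGF q (M + 1) +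
      ∑ p ∈ antidiagonal M, q ^ (p.1 + if p.2 = 1 then 1 else 0) *
        (zigzagGF q p.1 * zigzagGF q p.2) := by
  conv_lhs => rw [zigzagGF, zigzagWords_succ hM]
  rw [sumGF_union, sumGF_biUnion, sumGF_zigzagWords_notMem_zero]
  · refine congrArg _ (Finset.sum_congr rfl fun p _ => ?_)
    rw [sumGF_image2_append_cons q fun l hl => hl.2, sumGF_zigzagWords_notMem_zero,
      sumGF_zigzagWords_head_pos, pow_add]
    ring
  · rintro p - p' - hp
    refine Set.disjoint_left.2 ?_
    rintro _ ⟨σ, hσ, τ, hτ, rfl⟩ ⟨σ', hσ', τ', hτ', h⟩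
    obtain ⟨rfl, rfl⟩ := Prod.mk.inj (append_cons_injOn 0 hσ'.2 hσ.2 h)
    exact hp (Prod.ext (hσ.1.1.symm.trans hσ'.1.1) (hτ.1.1.symm.trans hτ'.1.1))
  · refine Set.disjoint_left.2 fun l hl hl' => hl.2 ?_
    obtain ⟨p, -, σ, -, τ, -, rfl⟩ := Set.mem_iUnion₂.1 hl'
    simp

theorem zigzagGF_zero (q : ENNReal) : zigzagGF q 0 = 0 := by
  have h : zigzagWords 0 = ∅ := by
    refine Set.eq_empty_of_forall_notMem fun l hl => ?_
    obtain rfl := List.length_eq_zero_iff.1 hl.1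
    exact hl.2
  rw [zigzagGF, h, sumGF, tsum_empty]

theorem zigzagGF_one (q : ENNReal) : zigzagGF q 1 = (1 - q)⁻¹ := by
  have h : zigzagWords 1 = Set.range fun a : ℕ => [a] := by
    ext l
    constructor
    · rintro ⟨hl, -⟩
      obtain ⟨a, rfl⟩ := List.length_eq_one_iff.1 hl
      exact ⟨a, rfl⟩
    · rintro ⟨a, rfl⟩
      exact ⟨rfl, trivial⟩
  rw [← ENNReal.tsum_geometric, zigzagGF, h, sumGF,
    tsum_range (fun l : List ℕ => q ^ l.sum) List.singleton_injective]
  simp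

end ZigzagSequences

/-! ### Sequences sorted by a given permutation -/

section Gaps

theorem one_sub_mul_qNumber_add_pow {q : ENNReal} (hq : q ≤ 1) (n : ℕ) :
    (1 - q) * qNumber q n + q ^ n = 1 := by
  induction n with
  | zero => simp [qNumber]
  | succ n ih =>
    calc (1 - q) * qNumber q (n + 1) + q ^ (n + 1)
        = (1 - q) * qNumber q n + (1 - q + q) * q ^ n := by
          rw [qNumber, Finset.sum_range_succ, ← qNumber]
          ring
      _ = 1 := by rw [tsub_add_cancel_of_le hq, one_mul, ih]

theorem qFactorial_ne_zero (q : ENNReal) (n : ℕ) : qFactorial q n ≠ 0 :=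
  Finset.prod_ne_zero_iff.2 fun i _ => by simp [qNumber, Finset.sum_range_succ']

theorem tsum_ite_le_pow (r : ENNReal) (c : ℕ) :
    (∑' b : ℕ, if c ≤ b then r ^ b else 0) = r ^ c * (1 - r)⁻¹ := by
  have hsupp : Function.support (fun b : ℕ => if c ≤ b then r ^ b else 0) ⊆ Set.range (· + c) :=
    fun b hb => ⟨b - c, Nat.sub_add_cancel (by_contra fun h => hb (if_neg h))⟩
  rw [← ENNReal.tsum_geometric, ← ENNReal.tsum_mul_left, ← (add_left_injective c).tsum_eq hsupp]
  exact tsum_congr fun b => by rw [if_pos (Nat.le_add_left c b), pow_add, mul_comm]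

/-- The generating function by sum of the sequences `h₀, …, h_{k-1}` with `h_{i+1} + d_i ≤ h_i` for
all `i < k`, where `h_k = a`. -/
def gapGF (q : ENNReal) (d : ℕ → ℕ) (k a : ℕ) : ENNReal :=
  ∑' h : Fin k → ℕ, if ∀ i : Fin k, (Fin.snoc h a : Fin (k + 1) → ℕ) i.succ + d i ≤ h i
    then q ^ ∑ i, h i else 0

theorem gapGF_zero (q : ENNReal) (d : ℕ → ℕ) (a : ℕ) : gapGF q d 0 a = 1 := by
  simp [gapGF]

theorem gapGF_succ (q : ENNReal) (d : ℕ → ℕ) (k a : ℕ) :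
    gapGF q d (k + 1) a = ∑' b, if a + d k ≤ b then q ^ b * gapGF q d k b else 0 := by
  rw [gapGF, ← (Fin.snocEquiv fun _ : Fin (k + 1) => ℕ).tsum_eq, ENNReal.tsum_prod']
  refine tsum_congr fun b => ?_
  simp only [Fin.forall_fin_succ', Fin.sum_univ_castSucc, Fin.snocEquiv_apply, Fin.succ_castSucc,
    Fin.snoc_castSucc, Fin.val_castSucc, Fin.succ_last, Fin.snoc_last, Fin.val_last]
  split_ifs with hb
  · rw [gapGF, ← ENNReal.tsum_mul_left]
    simp [hb, pow_add, mul_comm]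
  · simp [hb]

theorem gapGF_mul {q : ENNReal} (hq : q < 1) (d : ℕ → ℕ) (k a : ℕ) :
    gapGF q d k a * ((1 - q) ^ k * qFactorial q k) =
      q ^ (k * a + ∑ i ∈ range k, (i + 1) * d i) := by
  induction k generalizing a with
  | zero => simp [gapGF_zero, qFactorial_zero]
  | succ k ih =>
    have hterm (b : ℕ) :
        (if a + d k ≤ b then q ^ b * gapGF q d k b else 0) * ((1 - q) ^ k * qFactorial q k) =
          q ^ (∑ i ∈ range k, (i + 1) * d i) * if a + d k ≤ b then (q ^ (k + 1)) ^ b else 0 := by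
      split_ifs
      · rw [mul_assoc, ih]
        ring
      · simp
    have hnum : (1 - q) * qNumber q (k + 1) = 1 - q ^ (k + 1) :=
      ENNReal.eq_sub_of_add_eq (ENNReal.pow_ne_top hq.ne_top)
        (one_sub_mul_qNumber_add_pow hq.le _)
    have hpos : 1 - q ^ (k + 1) ≠ 0 := (tsub_pos_of_lt (pow_lt_one₀ zero_le hq k.succ_ne_zero)).ne'
    calc gapGF q d (k + 1) a * ((1 - q) ^ (k + 1) * qFactorial q (k + 1))
        = gapGF q d (k + 1) a * ((1 - q) ^ k * qFactorial q k) * (1 - q ^ (k + 1)) := by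
          rw [← hnum, qFactorial_succ]
          ring
      _ = q ^ (∑ i ∈ range k, (i + 1) * d i) * ((q ^ (k + 1)) ^ (a + d k) *
            ((1 - q ^ (k + 1))⁻¹ * (1 - q ^ (k + 1)))) := by
          rw [gapGF_succ, ← ENNReal.tsum_mul_right, tsum_congr hterm, ENNReal.tsum_mul_left,
            tsum_ite_le_pow, mul_assoc, mul_assoc]
      _ = q ^ ((k + 1) * a + ∑ i ∈ range (k + 1), (i + 1) * d i) := by
          rw [ENNReal.inv_mul_cancel hpos (ENNReal.sub_ne_top ENNReal.one_ne_top),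
            Finset.sum_range_succ]
          ring

end Gaps

section Sorting

theorem eq_sort_iff_lt_succ {α : Type*} [LinearOrder α] {n : ℕ} {f : Fin (n + 1) → α}
    {σ : Equiv.Perm (Fin (n + 1))} :
    σ = Tuple.sort f ↔ ∀ i : Fin n, f (σ i.castSucc) < f (σ i.succ) ∨
      f (σ i.castSucc) = f (σ i.succ) ∧ σ i.castSucc < σ i.succ := by
  rw [Tuple.eq_sort_iff', Fin.strictMono_iff_lt_succ]
  exact forall_congr' fun i => Prod.Lex.lt_iff

theorem sort_symm_lt_iff {α : Type*} [LinearOrder α] {n : ℕ} (f : Fin n → α) {x y : Fin n}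
    (h : y < x) : (Tuple.sort f).symm x < (Tuple.sort f).symm y ↔ f x < f y := by
  obtain ⟨hmono, hstable⟩ := Tuple.eq_sort_iff.1 (rfl : Tuple.sort f = Tuple.sort f)
  have hle {x y : Fin n} (h : (Tuple.sort f).symm x ≤ (Tuple.sort f).symm y) : f x ≤ f y := by
    simpa using hmono h
  refine ⟨fun hlt => (hle hlt.le).lt_of_ne fun heq => h.not_gt ?_, fun hlt => ?_⟩
  · simpa [heq] using hstable _ _ hlt
  · exact not_le.1 fun h => hlt.not_ge (hle h)

theorem word_add_one {N : ℕ} (u : Equiv.Perm (Fin N)) {i : ℕ} (h : i < N) :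
    word u (i + 1) = u ⟨i, h⟩ + 1 := by
  simp [word, Nat.succ_le_of_lt h]

theorem majW_succ (M : ℕ) (w : ℕ → ℕ) : majW (M + 1) w =
    ∑ i ∈ range (M + 1), (i + 1) * if i < M ∧ w (i + 2) < w (i + 1) then 1 else 0 := by
  rw [majW, Finset.sum_range_succ, Nat.add_sub_cancel, ← Finset.Ico_add_one_right_eq_Icc,
    Finset.sum_Ico_eq_sum_range, Nat.add_sub_cancel, if_neg (by simp), mul_zero, add_zero]
  refine Finset.sum_congr rfl fun i hi => ?_
  rw [add_comm 1 i]
  simp [Finset.mem_range.1 hi]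

theorem eq_sort_toDual_iff_gap {M : ℕ} (u : Equiv.Perm (Fin (M + 1))) (g : Fin (M + 1) → ℕ) :
    u = Tuple.sort (OrderDual.toDual ∘ g) ↔
      ∀ i : Fin (M + 1), (Fin.snoc (g ∘ u) 0 : Fin (M + 2) → ℕ) i.succ +
        (if (i : ℕ) < M ∧ word u (i + 2) < word u (i + 1) then 1 else 0) ≤ (g ∘ u) i := by
  rw [eq_sort_iff_lt_succ, Fin.forall_fin_succ', and_iff_left (by simp [Fin.succ_last])]
  refine forall_congr' fun i => ?_
  have hne : (u i.castSucc : ℕ) ≠ u i.succ :=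
    Fin.val_injective.ne (u.injective.ne Fin.castSucc_lt_succ.ne)
  have hword₁ : word u (i + 1) = u i.castSucc + 1 := word_add_one u (i.2.trans M.lt_succ_self)
  have hword₂ : word u (i + 2) = u i.succ + 1 := word_add_one u (Nat.succ_lt_succ i.2)
  rw [Fin.succ_castSucc, Fin.snoc_castSucc, Fin.val_castSucc, hword₁, hword₂, Fin.lt_def]
  simp only [Function.comp_apply, OrderDual.toDual_lt_toDual, OrderDual.toDual_inj]
  split_ifs <;> omega

theorem tsum_eq_sort_mul {q : ENNReal} (hq : q < 1) {N : ℕ} (u : Equiv.Perm (Fin N)) :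
    (∑' g : Fin N → ℕ, if u = Tuple.sort (OrderDual.toDual ∘ g) then q ^ ∑ i, g i else 0) *
      ((1 - q) ^ N * qFactorial q N) = q ^ majW N (word u) := by
  rcases N with _ | M
  · rw [tsum_fintype, Fintype.sum_unique, if_pos (Subsingleton.elim _ _)]
    simp [qFactorial_zero, majW]
  · have hgap := gapGF_mul hq
      (fun i => if i < M ∧ word u (i + 2) < word u (i + 1) then 1 else 0) (M + 1) 0
    rw [← majW_succ, mul_zero, zero_add, gapGF,
      ← (u.symm.arrowCongr (Equiv.refl ℕ)).tsum_eq] at hgap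
    rw [← hgap]
    congr 1
    refine tsum_congr fun g => if_congr (eq_sort_toDual_iff_gap u g) ?_ rfl
    exact congrArg _ (Equiv.sum_comp u g).symm

theorem tsum_sort_mem_mul {q : ENNReal} (hq : q < 1) {N : ℕ} (L : Finset (Equiv.Perm (Fin N))) :
    (∑' g : Fin N → ℕ, if Tuple.sort (OrderDual.toDual ∘ g) ∈ L then q ^ ∑ i, g i else 0) *
      ((1 - q) ^ N * qFactorial q N) = ∑ u ∈ L, q ^ majW N (word u) := by
  have hsplit (g : Fin N → ℕ) :
      (if Tuple.sort (OrderDual.toDual ∘ g) ∈ L then q ^ ∑ i, g i else 0) =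
        ∑ u ∈ L, if u = Tuple.sort (OrderDual.toDual ∘ g) then q ^ ∑ i, g i else 0 :=
    (Finset.sum_ite_eq' L _ fun _ => q ^ ∑ i, g i).symm
  rw [tsum_congr hsplit, Summable.tsum_finsetSum fun _ _ => ENNReal.summable, Finset.sum_mul]
  exact Finset.sum_congr rfl fun u _ => tsum_eq_sort_mul hq u

end Sorting

section ZigzagFunctions

theorem zigzagGF_eq_tsum (q : ENNReal) (N : ℕ) : zigzagGF q N =
    ∑' f : Fin N → ℕ, if Zigzag (· < ·) (List.ofFn f) then q ^ ∑ i, f i else 0 := by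
  have hsupp : Function.support ((zigzagWords N).indicator fun l => q ^ l.sum) ⊆
      Set.range (List.ofFn : (Fin N → ℕ) → List ℕ) := by
    refine (Set.support_indicator_subset).trans fun l hl => ?_
    obtain rfl := hl.1
    exact ⟨l.get, List.ofFn_get l⟩
  rw [zigzagGF, sumGF, tsum_subtype (zigzagWords N) fun l => q ^ l.sum,
    ← List.ofFn_injective.tsum_eq hsupp]
  simp [Set.indicator_apply, zigzagWords, List.sum_ofFn]

theorem zigzagGF_ne_top {q : ENNReal} (hq : q < 1) (N : ℕ) : zigzagGF q N ≠ ⊤ := by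
  have hall : (∑' f : Fin N → ℕ, q ^ ∑ i, f i) * ((1 - q) ^ N * qFactorial q N) =
      ∑ u : Equiv.Perm (Fin N), q ^ majW N (word u) := by
    simpa using tsum_sort_mem_mul hq (univ : Finset (Equiv.Perm (Fin N)))
  have hpos : (1 - q) ^ N * qFactorial q N ≠ 0 :=
    mul_ne_zero (pow_ne_zero N (tsub_pos_of_lt hq).ne') (qFactorial_ne_zero q N)
  have hfin : ∑' f : Fin N → ℕ, q ^ ∑ i, f i ≠ ⊤ := fun htop => by
    rw [htop, ENNReal.top_mul hpos] at hall
    exact ENNReal.sum_ne_top.2 (fun u _ => ENNReal.pow_ne_top hq.ne_top) hall.symm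
  rw [zigzagGF_eq_tsum]
  exact ne_top_of_le_ne_top hfin (ENNReal.tsum_le_tsum fun f => by split_ifs <;> simp)

theorem qNumber_mul_zigzagGF {q : ENNReal} (hq : q < 1) {M : ℕ} (hM : M ≠ 0) :
    (1 - q) * qNumber q (M + 1) * zigzagGF q (M + 1) =
      ∑ p ∈ antidiagonal M, q ^ (p.1 + if p.2 = 1 then 1 else 0) *
        (zigzagGF q p.1 * zigzagGF q p.2) := by
  have hfin : q ^ (M + 1) * zigzagGF q (M + 1) ≠ ⊤ :=
    ENNReal.mul_ne_top (ENNReal.pow_ne_top hq.ne_top) (zigzagGF_ne_top hq _)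
  rw [← ENNReal.add_right_inj hfin, ← zigzagGF_succ q hM, ← add_mul, add_comm (q ^ (M + 1)),
    one_sub_mul_qNumber_add_pow hq.le, one_mul]

theorem altGF_eq_mul_zigzagGF {α : Type*} [LinearOrder α] {q : ENNReal} (hq : q < 1)
    (S : Finset α) : altGF q S = zigzagGF q #S * ((1 - q) ^ #S * qFactorial q #S) := by
  have hrec (M : ℕ) (hM : M ≠ 0) :
      qNumber q (M + 1) * ((1 - q) ^ (M + 1) * zigzagGF q (M + 1)) =
        ∑ p ∈ antidiagonal M, q ^ (p.1 + if p.2 = 1 then 1 else 0) *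
          ((1 - q) ^ p.1 * zigzagGF q p.1 * ((1 - q) ^ p.2 * zigzagGF q p.2)) := by
    calc qNumber q (M + 1) * ((1 - q) ^ (M + 1) * zigzagGF q (M + 1))
        = (1 - q) ^ M * ((1 - q) * qNumber q (M + 1) * zigzagGF q (M + 1)) := by ring
      _ = _ := by
        rw [qNumber_mul_zigzagGF hq hM, Finset.mul_sum]
        refine Finset.sum_congr rfl fun p hp => ?_
        rw [← mem_antidiagonal.1 hp]
        ring
  rw [altGF_eq_qFactorial_mul (z := fun n => (1 - q) ^ n * zigzagGF q n) _ _ hrec]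
  · ring
  · simp [zigzagGF_zero]
  · simpa [zigzagGF_one] using ENNReal.mul_inv_cancel (tsub_pos_of_lt hq).ne'
      (ENNReal.sub_ne_top ENNReal.one_ne_top)

end ZigzagFunctions

/-! ### The involution `η` -/

section Eta

theorem etaNat_sub_one_lt {N j : ℕ} (h : j < N) : etaNat N (j + 1) - 1 < N := by
  unfold etaNat
  split_ifs <;> omega

theorem etaNat_etaNat {N j : ℕ} (h : j < N) :
    etaNat N (etaNat N (j + 1) - 1 + 1) - 1 = j := by
  unfold etaNat
  split_ifs <;> omega

/-- The involution `η_N = (1,2)(3,4)⋯` as a permutation of the 0-based index set `Fin N`. -/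
def etaPerm (N : ℕ) : Equiv.Perm (Fin N) :=
  Function.Involutive.toPerm (fun j => ⟨etaNat N (j + 1) - 1, etaNat_sub_one_lt j.2⟩)
    fun j => Fin.ext (etaNat_etaNat j.2)

theorem val_etaPerm {N : ℕ} (j : Fin N) : (etaPerm N j : ℕ) = etaNat N (j + 1) - 1 := rfl

theorem word_etaPerm_mul_inv {N : ℕ} (π : Equiv.Perm (Fin N)) (i : ℕ) :
    word (etaPerm N * π⁻¹) i = etaNat N (word π.symm i) := by
  unfold word
  split_ifs with h
  · have hpos : etaNat N (π.symm ⟨i - 1, by omega⟩ + 1) ≠ 0 := by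
      unfold etaNat
      split_ifs <;> omega
    rw [Equiv.Perm.mul_apply, val_etaPerm]
    exact Nat.sub_add_cancel (Nat.pos_of_ne_zero hpos)
  · simp [etaNat]

theorem majW_word_etaPerm_mul_inv {N : ℕ} (π : Equiv.Perm (Fin N)) :
    majW N (word (etaPerm N * π⁻¹)) = majEtaInv N π :=
  congrArg (majW N) (funext (word_etaPerm_mul_inv π))

theorem mem_altPerms_iff {N : ℕ} {π : Equiv.Perm (Fin N)} : π ∈ altPerms N ↔
    ∀ i (h : i + 1 < N),
      (i % 2 = 0 → π ⟨i, by omega⟩ < π ⟨i + 1, h⟩) ∧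
      (i % 2 = 1 → π ⟨i + 1, h⟩ < π ⟨i, by omega⟩) := by
  rw [altPerms, Finset.mem_filter, and_iff_right (Finset.mem_univ π)]
  constructor
  · intro halt i h
    have halt := halt (i + 1) (Finset.mem_Icc.2 (by omega))
    rw [word_add_one π h, word_add_one π (i.lt_succ_self.trans h)] at halt
    simp only [Fin.lt_def]
    omega
  · intro halt i hi
    obtain ⟨hi₁, hi₂⟩ := Finset.mem_Icc.1 hi
    obtain ⟨j, rfl⟩ := Nat.exists_eq_add_of_le' hi₁
    have h : j + 1 < N := by omega
    have halt := halt j h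
    rw [word_add_one π h, word_add_one π (j.lt_succ_self.trans h)]
    simp only [Fin.lt_def] at halt
    omega

theorem mem_altPerms_iff_zigzag {N : ℕ} (hN : N % 2 = 1) {π : Equiv.Perm (Fin N)} :
    π ∈ altPerms N ↔ Zigzag (· > ·) (List.ofFn π) := by
  rw [mem_altPerms_iff, zigzag_ofFn_iff hN]

-- Wherever `g ∘ η` has to descend, `η` descends too; equal values of `g` keep their order in the
-- stable sort, so the strict inequalities for `g` are those for the inverse of the sorting
-- permutation.
theorem zigzag_comp_etaPerm_iff {N : ℕ} (hN : N % 2 = 1) (g : Fin N → ℕ) :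
    Zigzag (· < ·) (List.ofFn (g ∘ etaPerm N)) ↔
      (Tuple.sort (OrderDual.toDual ∘ g))⁻¹ * etaPerm N ∈ altPerms N := by
  rw [mem_altPerms_iff, zigzag_ofFn_iff hN]
  refine forall_congr' fun i => forall_congr' fun h => and_congr ?_ ?_ <;>
  · refine forall_congr' fun hi => ?_
    rw [Equiv.Perm.mul_apply, Equiv.Perm.mul_apply, Equiv.Perm.inv_def, sort_symm_lt_iff]
    · rfl
    · rw [Fin.lt_def, val_etaPerm, val_etaPerm]
      simp only [etaNat]
      split_ifs <;> omega

theorem zigzagGF_mul_eq_sum_majEtaInv {q : ENNReal} (hq : q < 1) {N : ℕ} (hN : N % 2 = 1) :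
    zigzagGF q N * ((1 - q) ^ N * qFactorial q N) = ∑ π ∈ altPerms N, q ^ majEtaInv N π := by
  let e : Equiv.Perm (Fin N) ≃ Equiv.Perm (Fin N) :=
    (Equiv.inv _).trans (Equiv.mulLeft (etaPerm N))
  have he (u : Equiv.Perm (Fin N)) :
      u ∈ (altPerms N).map e.toEmbedding ↔ u⁻¹ * etaPerm N ∈ altPerms N := by
    rw [Finset.mem_map_equiv, show e.symm u = u⁻¹ * etaPerm N by simp [e]]
  have hGF : zigzagGF q N = ∑' g : Fin N → ℕ,
      if Tuple.sort (OrderDual.toDual ∘ g) ∈ (altPerms N).map e.toEmbedding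
        then q ^ ∑ i, g i else 0 := by
    rw [zigzagGF_eq_tsum, ← ((etaPerm N).arrowCongr (Equiv.refl ℕ)).tsum_eq]
    refine tsum_congr fun g => if_congr ?_ ?_ rfl
    · rw [he, ← zigzag_comp_etaPerm_iff hN]
      rfl
    · exact congrArg _ (Equiv.sum_comp (etaPerm N) g)
  rw [hGF, tsum_sort_mem_mul hq, Finset.sum_map]
  exact Finset.sum_congr rfl fun π _ => congrArg _ (majW_word_etaPerm_mul_inv π)

end Eta

/-! ### Alternating permutations as lists -/

section Lists

variable {α : Type*}

theorem countP_ofFn (p : α → Bool) {N : ℕ} (f : Fin N → α) :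
    (List.ofFn f).countP p = ∑ i, if p (f i) then 1 else 0 := by
  induction N with
  | zero => simp
  | succ N ih => rw [List.ofFn_succ, List.countP_cons, Fin.sum_univ_succ, add_comm, ih]

theorem evens_ofFn {n : ℕ} (f : Fin (2 * n + 1) → α) :
    evens (List.ofFn f) = List.ofFn fun i : Fin n => f ⟨2 * i + 1, by omega⟩ := by
  induction n with
  | zero => simp [evens]
  | succ n ih =>
    change evens (List.ofFn (n := 2 * n + 1 + 1 + 1) f) = _
    rw [List.ofFn_succ, List.ofFn_succ, evens, ih, List.ofFn_succ]
    rfl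

variable [LinearOrder α]

theorem listInv_ofFn {N : ℕ} (f : Fin N → α) :
    listInv (List.ofFn f) = ∑ i, ∑ j, if i < j ∧ f j < f i then 1 else 0 := by
  induction N with
  | zero => simp [listInv]
  | succ N ih =>
    rw [List.ofFn_succ, listInv, countP_ofFn, ih]
    simp only [Fin.sum_univ_succ, Fin.succ_lt_succ_iff, Fin.succ_pos, Fin.not_lt_zero, true_and,
      false_and, if_false, zero_add, decide_eq_true_eq]

theorem listNasc_ofFn {m : ℕ} (f : Fin m → α) : listNasc (List.ofFn f) =
    ∑ i : Fin m, if ∃ h : (i : ℕ) + 1 < m, f i < f ⟨i + 1, h⟩ then 0 else 1 := by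
  induction m with
  | zero => rfl
  | succ m ih =>
    rcases m with _ | m
    · rw [Fin.sum_univ_one, if_neg fun ⟨h, _⟩ => lt_irrefl _ h]
      rfl
    · have htail := ih fun i => f i.succ
      rw [List.ofFn_succ] at htail
      rw [Fin.sum_univ_succ, List.ofFn_succ, List.ofFn_succ, listNasc, htail]
      congr 1
      · exact if_congr ⟨fun h => ⟨Nat.succ_lt_succ m.succ_pos, h⟩, fun ⟨_, h⟩ => h⟩ rfl rfl
      · simp

end Lists

theorem invW_word {N : ℕ} (π : Equiv.Perm (Fin N)) :
    invW N (word π) = listInv (List.ofFn π) := by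
  rw [invW, Finset.card_filter, Finset.sum_product, listInv_ofFn]
  simp only [← Finset.Ico_add_one_right_eq_Icc, Finset.sum_Ico_eq_sum_range,
    Nat.add_sub_cancel, add_comm 1, add_lt_add_iff_right, Finset.sum_range]
  simp [word_add_one]

theorem nascW_evenWord {n : ℕ} (π : Equiv.Perm (Fin (2 * n + 1))) :
    nascW n (evenWord π) = listNasc (evens (List.ofFn π)) := by
  rw [nascW, Finset.card_filter, evens_ofFn, listNasc_ofFn, ← Finset.Ico_add_one_right_eq_Icc,
    Finset.sum_Ico_eq_sum_range, Nat.add_sub_cancel, Finset.sum_range]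
  refine Finset.sum_congr rfl fun i _ => ?_
  have hword {j : ℕ} (hj : j < n) : evenWord π (j + 1) = π ⟨2 * j + 1, by omega⟩ + 1 :=
    word_add_one π _
  rw [← ite_not, add_comm 1, hword i.2]
  refine if_congr ?_ rfl rfl
  rw [not_or, not_not]
  refine ⟨fun ⟨hi, hlt⟩ => ?_, fun ⟨hi, hlt⟩ => ?_⟩
  · have hi : (i : ℕ) + 1 < n := by omega
    rw [hword hi] at hlt
    exact ⟨hi, by simpa using hlt⟩
  · rw [hword hi]
    exact ⟨hi.ne, by simpa using hlt⟩

theorem exists_ofFn_eq_of_mem_altLists {N : ℕ} {l : List (Fin N)} (hl : l ∈ altLists univ) :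
    ∃ π : Equiv.Perm (Fin N), List.ofFn π = l := by
  have hlen : l.length = N := by
    rw [← List.toFinset_card_of_nodup (nodup_of_mem_altLists hl), toFinset_eq_of_mem_altLists hl,
      Finset.card_univ, Fintype.card_fin]
  let e := (nodup_of_mem_altLists hl).getEquivOfForallMemList l
    fun x => List.mem_toFinset.1 (toFinset_eq_of_mem_altLists hl ▸ Finset.mem_univ x)
  refine ⟨(finCongr hlen.symm).trans e, List.ext_get (by simp [hlen]) fun i _ _ => ?_⟩
  simp [e]

theorem altLists_univ {N : ℕ} (hN : N % 2 = 1) : altLists (univ : Finset (Fin N)) =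
    (altPerms N).image fun π : Equiv.Perm (Fin N) => List.ofFn π := by
  have hval (π : Equiv.Perm (Fin N)) : (univ : Finset (Fin N)).val = List.ofFn π := by
    rw [← Fin.univ_val_map, Multiset.map_univ_val_equiv]
  ext l
  rw [Finset.mem_image]
  constructor
  · intro hl
    obtain ⟨π, rfl⟩ := exists_ofFn_eq_of_mem_altLists hl
    exact ⟨π, (mem_altPerms_iff_zigzag hN).2 (mem_altLists.1 hl).2, rfl⟩
  · rintro ⟨π, hπ, rfl⟩
    exact mem_altLists.2 ⟨hval π, (mem_altPerms_iff_zigzag hN).1 hπ⟩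

theorem altGF_univ {R : Type*} [CommSemiring R] (q : R) (n : ℕ) :
    altGF q (univ : Finset (Fin (2 * n + 1))) =
      ∑ π ∈ altPerms (2 * n + 1), q ^ (invW (2 * n + 1) (word π) + nascW n (evenWord π)) := by
  have hinj : Function.Injective fun π : Equiv.Perm (Fin (2 * n + 1)) => List.ofFn π :=
    List.ofFn_injective.comp DFunLike.coe_injective
  rw [altGF, altLists_univ (by omega), Finset.sum_image hinj.injOn]
  exact Finset.sum_congr rfl fun π _ => by rw [invW_word, nascW_evenWord, altWeight]

theorem sum_pow_majEtaInv {q : ENNReal} (hq : q < 1) (n : ℕ) :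
    ∑ π ∈ altPerms (2 * n + 1), q ^ majEtaInv (2 * n + 1) π =
      ∑ π ∈ altPerms (2 * n + 1), q ^ (invW (2 * n + 1) (word π) + nascW n (evenWord π)) := by
  rw [← altGF_univ, altGF_eq_mul_zigzagGF hq, Finset.card_univ, Fintype.card_fin,
    zigzagGF_mul_eq_sum_majEtaInv hq (by omega)]

theorem sum_X_pow_eq_of_ennreal {ι : Type*} (s : Finset ι) (f g : ι → ℕ)
    (h : ∀ q : ENNReal, q < 1 → ∑ i ∈ s, q ^ f i = ∑ i ∈ s, q ^ g i) :
    ∑ i ∈ s, (Polynomial.X : Polynomial ℤ) ^ f i = ∑ i ∈ s, Polynomial.X ^ g i := by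
  refine Polynomial.map_injective (Int.castRingHom ℝ) Int.cast_injective ?_
  refine Polynomial.eq_of_infinite_eval_eq _ _ ((Set.Ioo_infinite zero_lt_one).mono ?_)
  rintro x ⟨hx₀, hx₁⟩
  have hsum (e : ι → ℕ) : (∑ i ∈ s, ENNReal.ofReal x ^ e i).toReal = ∑ i ∈ s, x ^ e i := by
    rw [ENNReal.toReal_sum fun i _ => ENNReal.pow_ne_top ENNReal.ofReal_ne_top]
    simp [hx₀.le]
  have hx : ∑ i ∈ s, x ^ f i = ∑ i ∈ s, x ^ g i := by
    rw [← hsum, h _ (ENNReal.ofReal_lt_one.2 hx₁), hsum]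
  simpa [Polynomial.map_sum, Polynomial.eval_finsetSum] using hx

theorem statement_6 (n : ℕ) :
    (∑ π ∈ altPerms (2 * n + 1), (Polynomial.X : Polynomial ℤ) ^ majEtaInv (2 * n + 1) π) =
      ∑ π ∈ altPerms (2 * n + 1),
        (Polynomial.X : Polynomial ℤ) ^ (invW (2 * n + 1) (word π) + nascW n (evenWord π)) :=
  sum_X_pow_eq_of_ennreal _ _ _ fun _ hq => sum_pow_majEtaInv hq n

end Paper
end
end

section
/- For every positive integer n, the identity Σ_{π∈Alt_{2n}} q^{maj(κ_{2n}π^{-1})} = Σ_{π∈Alt_{2n}} q^{inv(π)−asc(π_e)} holds (as an identity of Laurent polynomials in q; in fact all exponents on the right are nonnegative). -/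
open Finset

attribute [local instance 10] Classical.propDecidable

noncomputable section

namespace Paper

/-!
List the positions of an alternating permutation by decreasing value. In this word `inv` counts the
pairs `p < q` with `p` to the left of `q`, `asc(π_e)` counts the pairs `2i + 2, 2i` in this order,
and `maj(κ_N π⁻¹)` is the major index of the reversed word after relabelling by `κ_N`. Alternation
means that every even position precedes its odd neighbours. Hence the first letter `x` is even, and
the rest is an arbitrary shuffle of an alternating order of the positions before `x` and one of the
positions after `x`.

Summing over the shuffles gives the same `q`-binomial coefficient for both statistics: for `inv` by
the usual count of inversions between two words, for `maj` by a form of the Garsia–Gessel shuffle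
theorem. The remaining powers of `q` in the two recursions agree, except for one extra factor `q` on
the `inv(π) - asc(π_e)` side when `N > 1` is odd.
-/

lemma sum_pow_eq_pow_mul_sum {ι R : Type*} [CommSemiring R] (q : R) {l : List ι} {f g : ι → ℕ}
    {c : ℕ} (h : ∀ i ∈ l, f i = c + g i) :
    (l.map fun i => q ^ f i).sum = q ^ c * (l.map fun i => q ^ g i).sum := by
  rw [← List.sum_map_mul_left]
  exact congrArg List.sum (List.map_congr_left fun i hi => by rw [h i hi, pow_add])

section Shuffles

variable {α β : Type*}

/-- The shuffles of two words: all words obtained by interleaving them, listed with multiplicity. -/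
def shuffles : List α → List α → List (List α)
  | [], v => [v]
  | a :: u, [] => [a :: u]
  | a :: u, b :: v =>
      (shuffles u (b :: v)).map (a :: ·) ++ (shuffles (a :: u) v).map (b :: ·)
termination_by u v => u.length + v.length

@[simp]
lemma shuffles_nil_left (v : List α) : shuffles [] v = [v] := by rw [shuffles]

@[simp]
lemma shuffles_nil_right (u : List α) : shuffles u [] = [u] := by cases u <;> rw [shuffles]

lemma shuffles_cons_cons (a b : α) (u v : List α) :
    shuffles (a :: u) (b :: v) =
      (shuffles u (b :: v)).map (a :: ·) ++ (shuffles (a :: u) v).map (b :: ·) := by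
  rw [shuffles]

lemma nil_mem_shuffles_iff {u v : List α} : [] ∈ shuffles u v ↔ u = [] ∧ v = [] := by
  cases u <;> cases v <;> simp [shuffles_cons_cons]

lemma cons_mem_shuffles_iff {c : α} {u v w : List α} :
    c :: w ∈ shuffles u v ↔
      (∃ u', u = c :: u' ∧ w ∈ shuffles u' v) ∨ ∃ v', v = c :: v' ∧ w ∈ shuffles u v' := by
  cases u <;> cases v <;> simp [shuffles_cons_cons] <;> grind

lemma mem_shuffles_iff_filter (p : α → Prop) [DecidablePred p] {u v : List α} (w : List α)
    (hu : ∀ a ∈ u, p a) (hv : ∀ b ∈ v, ¬p b) :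
    w ∈ shuffles u v ↔ w.filter p = u ∧ w.filter (¬p ·) = v := by
  induction w generalizing u v with
  | nil => simp [nil_mem_shuffles_iff, eq_comm]
  | cons c w ih =>
    rw [cons_mem_shuffles_iff]
    by_cases hc : p c
    · have hcv : ∀ v', v ≠ c :: v' := by rintro v' rfl; exact hv c (by simp) hc
      simp only [hcv, false_and, exists_false, or_false, List.filter_cons, hc, decide_true,
        not_true_eq_false, decide_false, if_true, Bool.false_eq_true, if_false]
      constructor
      · rintro ⟨u', rfl, hw⟩
        obtain ⟨rfl, rfl⟩ := (ih (fun a ha => hu a (List.mem_cons_of_mem _ ha)) hv).1 hw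
        exact ⟨rfl, rfl⟩
      · rintro ⟨rfl, hwv⟩
        exact ⟨_, rfl, (ih (fun a ha => hu a (List.mem_cons_of_mem _ ha)) hv).2 ⟨rfl, hwv⟩⟩
    · have hcu : ∀ u', u ≠ c :: u' := by rintro u' rfl; exact hc (hu c (by simp))
      simp only [hcu, false_and, exists_false, false_or, List.filter_cons, hc, decide_true,
        not_false_eq_true, decide_false, if_true, Bool.false_eq_true, if_false]
      constructor
      · rintro ⟨v', rfl, hw⟩
        obtain ⟨rfl, rfl⟩ := (ih hu fun b hb => hv b (List.mem_cons_of_mem _ hb)).1 hw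
        exact ⟨rfl, rfl⟩
      · rintro ⟨hwu, rfl⟩
        exact ⟨_, rfl, (ih hu fun b hb => hv b (List.mem_cons_of_mem _ hb)).2 ⟨hwu, rfl⟩⟩

lemma mem_shuffles_iff_filter_lt [LinearOrder α] {x : α} {u v : List α} (w : List α)
    (hu : ∀ a ∈ u, a < x) (hv : ∀ b ∈ v, x ≤ b) :
    w ∈ shuffles u v ↔ w.filter (· < x) = u ∧ w.filter (x ≤ ·) = v := by
  simpa only [not_lt] using mem_shuffles_iff_filter (· < x) w hu fun b hb => (hv b hb).not_gt

lemma perm_append_of_mem_shuffles {u v w : List α} (hw : w ∈ shuffles u v) :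
    w.Perm (u ++ v) := by
  induction w generalizing u v with
  | nil => simp [nil_mem_shuffles_iff.1 hw]
  | cons c w ih =>
    rcases cons_mem_shuffles_iff.1 hw with ⟨u', rfl, hw'⟩ | ⟨v', rfl, hw'⟩
    · exact (ih hw').cons c
    · exact ((ih hw').cons c).trans List.perm_middle.symm

lemma length_of_mem_shuffles {u v w : List α} (hw : w ∈ shuffles u v) :
    w.length = u.length + v.length := by
  simpa using (perm_append_of_mem_shuffles hw).length_eq

lemma nodup_shuffles {u v : List α} (h : u.Disjoint v) : (shuffles u v).Nodup := by
  induction u, v using shuffles.induct with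
  | case1 v => simp
  | case2 a u => simp
  | case3 a u b v ihu ihv =>
    have hab : a ≠ b := by rintro rfl; exact h List.mem_cons_self List.mem_cons_self
    rw [shuffles_cons_cons]
    refine List.Nodup.append
      ((ihu (List.disjoint_of_disjoint_cons_left h)).map List.cons_injective)
      ((ihv (List.disjoint_of_disjoint_cons_right h)).map List.cons_injective) fun w hwa hwb => ?_
    obtain ⟨w₁, -, rfl⟩ := List.mem_map.1 hwa
    obtain ⟨w₂, -, hw₂⟩ := List.mem_map.1 hwb
    exact hab (List.cons.inj hw₂).1.symm

lemma shuffles_map (f : α → β) (u v : List α) :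
    shuffles (u.map f) (v.map f) = (shuffles u v).map (List.map f) := by
  induction u, v using shuffles.induct with
  | case1 v => simp
  | case2 a u => simp
  | case3 a u b v ihu ihv =>
    rw [List.map_cons] at ihv
    rw [List.map_cons] at ihu
    simp only [List.map_cons, shuffles_cons_cons, ihu, ihv, List.map_append, List.map_map]
    rfl

lemma shuffles_comm_perm (u v : List α) : (shuffles u v).Perm (shuffles v u) := by
  induction u, v using shuffles.induct with
  | case1 v => simp
  | case2 a u => simp
  | case3 a u b v ihu ihv =>
    rw [shuffles_cons_cons, shuffles_cons_cons]
    exact ((ihu.map _).append (ihv.map _)).trans List.perm_append_comm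

lemma sum_map_shuffles_cons_cons {M : Type*} [AddCommMonoid M] (f : List α → M) (a b : α)
    (u v : List α) :
    ((shuffles (a :: u) (b :: v)).map f).sum =
      ((shuffles u (b :: v)).map fun w => f (a :: w)).sum +
        ((shuffles (a :: u) v).map fun w => f (b :: w)).sum := by
  rw [shuffles_cons_cons, List.map_append, List.sum_append, List.map_map, List.map_map]
  rfl

end Shuffles

section GaussianBinomial

variable {R : Type*} [CommSemiring R]

/-- The Gaussian binomial coefficient `[m + n choose m]_q`, indexed by the lengths `m` and `n` of
the two words being shuffled. -/
def qBinom (q : R) : ℕ → ℕ → R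
  | 0, _ => 1
  | _ + 1, 0 => 1
  | m + 1, n + 1 => qBinom q m (n + 1) + q ^ (m + 1) * qBinom q (m + 1) n

@[simp]
lemma qBinom_zero_left (q : R) (n : ℕ) : qBinom q 0 n = 1 := by rw [qBinom]

@[simp]
lemma qBinom_zero_right (q : R) (m : ℕ) : qBinom q m 0 = 1 := by cases m <;> rw [qBinom]

lemma qBinom_succ_succ (q : R) (m n : ℕ) :
    qBinom q (m + 1) (n + 1) = qBinom q m (n + 1) + q ^ (m + 1) * qBinom q (m + 1) n := by
  rw [qBinom]

lemma qBinom_succ_succ' (q : R) (m n : ℕ) :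
    qBinom q (m + 1) (n + 1) = q ^ (n + 1) * qBinom q m (n + 1) + qBinom q (m + 1) n := by
  induction m generalizing n with
  | zero =>
    induction n with
    | zero => simp [qBinom_succ_succ, add_comm]
    | succ n ih =>
      calc qBinom q 1 (n + 2) = 1 + q * qBinom q 1 (n + 1) := by simp [qBinom_succ_succ q 0 (n + 1)]
        _ = 1 + q * (q ^ (n + 1) + qBinom q 1 n) := by simp [ih]
        _ = q ^ (n + 2) + (1 + q * qBinom q 1 n) := by ring
        _ = _ := by simp [qBinom_succ_succ q 0 n]
  | succ m ihm =>
    induction n with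
    | zero =>
      calc qBinom q (m + 2) 1 = qBinom q (m + 1) 1 + q ^ (m + 2) := by
            simp [qBinom_succ_succ q (m + 1) 0]
        _ = q * qBinom q m 1 + 1 + q ^ (m + 2) := by simp [ihm 0]
        _ = q * (qBinom q m 1 + q ^ (m + 1)) + 1 := by ring
        _ = _ := by simp [qBinom_succ_succ q m 0]
    | succ n ihn =>
      calc qBinom q (m + 2) (n + 2)
          = qBinom q (m + 1) (n + 2) + q ^ (m + 2) * qBinom q (m + 2) (n + 1) :=
            qBinom_succ_succ ..
        _ = q ^ (n + 2) * qBinom q m (n + 2) + qBinom q (m + 1) (n + 1) +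
              q ^ (m + 2) * (q ^ (n + 1) * qBinom q (m + 1) (n + 1) + qBinom q (m + 2) n) := by
            rw [ihm, ihn]
        _ = q ^ (n + 2) * (qBinom q m (n + 2) + q ^ (m + 1) * qBinom q (m + 1) (n + 1)) +
              (qBinom q (m + 1) (n + 1) + q ^ (m + 2) * qBinom q (m + 2) n) := by ring
        _ = _ := by rw [← qBinom_succ_succ q m (n + 1), ← qBinom_succ_succ q (m + 1) n]

lemma qBinom_comm (q : R) (m n : ℕ) : qBinom q m n = qBinom q n m := by
  induction m, n using qBinom.induct with
  | case1 n => simp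
  | case2 m => simp
  | case3 m n ihm ihn => rw [qBinom_succ_succ', qBinom_succ_succ, ihm, ihn, add_comm]

lemma pow_mul_qBinom_add_pow_mul_qBinom (q : R) {m n s e₁ e₂ : ℕ}
    (h : e₁ = s ∧ e₂ = s + (m + 1) ∨ e₁ = s + (n + 1) ∧ e₂ = s) :
    q ^ e₁ * qBinom q m (n + 1) + q ^ e₂ * qBinom q (m + 1) n =
      q ^ s * qBinom q (m + 1) (n + 1) := by
  rcases h with ⟨rfl, rfl⟩ | ⟨rfl, rfl⟩
  · rw [qBinom_succ_succ]; ring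
  · rw [qBinom_succ_succ']; ring

end GaussianBinomial

section CountPairs

variable {α : Type*}

/-- The number of pairs of letters of a word, one to the left of the other, that are related
by `R`. -/
def countPairs (R : α → α → Prop) [DecidableRel R] : List α → ℕ
  | [] => 0
  | a :: w => countPairs R w + w.countP (R a ·)

variable (R : α → α → Prop) [DecidableRel R]

@[simp]
lemma countPairs_nil : countPairs R [] = 0 := rfl

@[simp]
lemma countPairs_cons (a : α) (w : List α) :
    countPairs R (a :: w) = countPairs R w + w.countP (R a ·) := rfl

lemma sum_countPairs_shuffles {S : Type*} [CommSemiring S] (q : S) {u v : List α}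
    (huv : ∀ a ∈ u, ∀ b ∈ v, R a b ∧ ¬R b a) :
    ((shuffles u v).map fun w => q ^ countPairs R w).sum =
      q ^ (countPairs R u + countPairs R v) * qBinom q u.length v.length := by
  induction u, v using shuffles.induct with
  | case1 v => simp
  | case2 a u => simp
  | case3 a u b v ihu ihv =>
    have ha : ∀ w ∈ shuffles u (b :: v), countPairs R (a :: w) =
        u.countP (R a ·) + (v.length + 1) + countPairs R w := by
      intro w hw
      have hv : (b :: v).countP (R a ·) = v.length + 1 :=
        List.countP_eq_length.2 fun c hc => by simpa using (huv a (by simp) c hc).1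
      rw [countPairs_cons, (perm_append_of_mem_shuffles hw).countP_eq, List.countP_append, hv,
        add_comm]
    have hb : ∀ w ∈ shuffles (a :: u) v, countPairs R (b :: w) =
        v.countP (R b ·) + countPairs R w := by
      intro w hw
      have hu : (a :: u).countP (R b ·) = 0 :=
        List.countP_eq_zero.2 fun c hc => by simpa using (huv c hc b (by simp)).2
      rw [countPairs_cons, (perm_append_of_mem_shuffles hw).countP_eq, List.countP_append, hu,
        zero_add, add_comm]
    rw [sum_map_shuffles_cons_cons, sum_pow_eq_pow_mul_sum q ha, sum_pow_eq_pow_mul_sum q hb,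
      ihu fun c hc => huv c (List.mem_cons_of_mem _ hc),
      ihv fun c hc d hd => huv c hc d (List.mem_cons_of_mem _ hd)]
    simp only [countPairs_cons, List.length_cons, qBinom_succ_succ' q u.length v.length]
    ring

lemma countPairs_of_mem_shuffles {u v w : List α} (huv : ∀ a ∈ u, ∀ b ∈ v, ¬R a b ∧ ¬R b a)
    (hw : w ∈ shuffles u v) : countPairs R w = countPairs R u + countPairs R v := by
  induction w generalizing u v with
  | nil => simp [nil_mem_shuffles_iff.1 hw]
  | cons c w ih =>
    rcases cons_mem_shuffles_iff.1 hw with ⟨u', rfl, hw'⟩ | ⟨v', rfl, hw'⟩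
    · have hv : v.countP (R c ·) = 0 :=
        List.countP_eq_zero.2 fun b hb => by simpa using (huv c (by simp) b hb).1
      rw [countPairs_cons, countPairs_cons, ih (fun a ha => huv a (List.mem_cons_of_mem _ ha)) hw',
        (perm_append_of_mem_shuffles hw').countP_eq, List.countP_append, hv]
      omega
    · have hu : u.countP (R c ·) = 0 :=
        List.countP_eq_zero.2 fun a ha => by simpa using (huv a ha c (by simp)).2
      rw [countPairs_cons, countPairs_cons,
        ih (fun a ha b hb => huv a ha b (List.mem_cons_of_mem _ hb)) hw',
        (perm_append_of_mem_shuffles hw').countP_eq, List.countP_append, hu]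
      omega

end CountPairs

section RevMaj

variable {α : Type*} [LinearOrder α]

/-- The major index of the reversal of a word: each ascent `x < y` contributes the number of
letters from `y` to the end. -/
def revMaj : List α → ℕ
  | [] => 0
  | [_] => 0
  | x :: y :: t => revMaj (y :: t) + if x < y then t.length + 1 else 0

@[simp]
lemma revMaj_nil : revMaj ([] : List α) = 0 := by rw [revMaj]

@[simp]
lemma revMaj_singleton (x : α) : revMaj [x] = 0 := by rw [revMaj]

lemma revMaj_cons_cons (x y : α) (t : List α) :
    revMaj (x :: y :: t) = revMaj (y :: t) + if x < y then t.length + 1 else 0 := by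
  rw [revMaj]

lemma revMaj_cons_of_forall_le {x : α} {u : List α} (h : ∀ a ∈ u, a ≤ x) :
    revMaj (x :: u) = revMaj u := by
  cases u with
  | nil => simp
  | cons a u => rw [revMaj_cons_cons, if_neg (h a List.mem_cons_self).not_gt, add_zero]

/-- A refinement of the Garsia–Gessel shuffle theorem: recording the letter `a` in front of the
shuffle is what makes the induction on the lengths go through. -/
theorem sum_revMaj_cons_shuffles {R : Type*} [CommSemiring R] (q : R) (a b : α) {u v : List α}
    (h : u.Disjoint (b :: v)) :
    ((shuffles u (b :: v)).map fun w => q ^ revMaj (a :: w)).sum =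
      q ^ (revMaj (a :: u) + revMaj (b :: v) + if a < b then v.length + 1 else 0) *
        qBinom q u.length (v.length + 1) := by
  induction hs : u.length + v.length using Nat.strong_induction_on generalizing a b u v with
  | _ s ih =>
  cases u with
  | nil => simp [revMaj_cons_cons]
  | cons c u =>
    have hcb : c ≠ b := by rintro rfl; exact h List.mem_cons_self List.mem_cons_self
    have first_c := ih (u.length + v.length) (by simp at hs; omega) c b
      (List.disjoint_of_disjoint_cons_left h) rfl
    have first_b := ih (v.length + u.length) (by simp at hs; omega) b c
      (List.disjoint_of_disjoint_cons_right h).symm rfl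
    rw [((shuffles_comm_perm _ _).map _).sum_eq, qBinom_comm] at first_b
    have hc : ∀ w ∈ shuffles u (b :: v), revMaj (a :: c :: w) =
        (if a < c then u.length + v.length + 2 else 0) + revMaj (c :: w) := fun w hw => by
      rw [revMaj_cons_cons, length_of_mem_shuffles hw, List.length_cons, add_comm]
      rfl
    have hb : ∀ w ∈ shuffles (c :: u) v, revMaj (a :: b :: w) =
        (if a < b then u.length + v.length + 2 else 0) + revMaj (b :: w) := fun w hw => by
      rw [revMaj_cons_cons, length_of_mem_shuffles hw, List.length_cons, add_comm,
        add_right_comm u.length]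
    rw [sum_map_shuffles_cons_cons, sum_pow_eq_pow_mul_sum q hc, sum_pow_eq_pow_mul_sum q hb,
      first_c, first_b, ← mul_assoc, ← mul_assoc, ← pow_add, ← pow_add, List.length_cons]
    apply pow_mul_qBinom_add_pow_mul_qBinom
    rw [revMaj_cons_cons]
    split_ifs <;> first | omega | order

end RevMaj

section AltOrders

open scoped List

/-- A word whose letters are positions is an alternating order if every even position in it
comes before its odd neighbours. Listing the positions of a permutation `π` by decreasing value
gives such a word exactly when `π` is alternating. -/
def IsAltOrder (r : List ℕ) : Prop :=
  ∀ p ∈ r, ∀ q ∈ r, p % 2 = 0 → (q = p + 1 ∨ p = q + 1) → [p, q] <+ r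

/-- The alternating orders of the positions `lo, …, hi - 1`. -/
def altOrders (lo hi : ℕ) : Finset (List ℕ) :=
  (List.Ico lo hi).permutations.toFinset.filter IsAltOrder

variable {lo hi x : ℕ} {r u v w : List ℕ}

lemma mem_altOrders : r ∈ altOrders lo hi ↔ r ~ List.Ico lo hi ∧ IsAltOrder r := by
  simp [altOrders]

lemma mem_of_mem_altOrders {p : ℕ} (h : r ∈ altOrders lo hi) : p ∈ r ↔ lo ≤ p ∧ p < hi := by
  rw [(mem_altOrders.1 h).1.mem_iff, List.Ico.mem]

lemma length_of_mem_altOrders (h : r ∈ altOrders lo hi) : r.length = hi - lo := by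
  rw [(mem_altOrders.1 h).1.length_eq, List.Ico.length]

lemma nodup_of_mem_altOrders (h : r ∈ altOrders lo hi) : r.Nodup :=
  (mem_altOrders.1 h).1.nodup_iff.2 (List.Ico.nodup lo hi)

lemma pair_sublist_cons {α : Type*} {a b x : α} {w : List α} :
    [a, b] <+ x :: w ↔ [a, b] <+ w ∨ a = x ∧ b ∈ w := by
  rw [List.cons_sublist_cons', List.singleton_sublist]

lemma isAltOrder_cons (hx : x % 2 = 0) (hxw : x ∉ w) :
    IsAltOrder (x :: w) ↔ IsAltOrder (w.filter (· < x)) ∧ IsAltOrder (w.filter (x ≤ ·)) := by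
  have restrict (P : ℕ → Prop) [DecidablePred P] (h : IsAltOrder (x :: w)) :
      IsAltOrder (w.filter P) := by
    intro p hp q hq hp2 hpq
    rw [List.mem_filter, decide_eq_true_eq] at hp hq
    have hpx : p ≠ x := by rintro rfl; exact hxw hp.1
    have hsub : [p, q] <+ w := (pair_sublist_cons.1 <| h p (List.mem_cons_of_mem _ hp.1) q
      (List.mem_cons_of_mem _ hq.1) hp2 hpq).resolve_right fun h => hpx h.1
    simpa [hp.2, hq.2] using hsub.filter (fun a => decide (P a))
  refine ⟨fun h => ⟨restrict _ h, restrict _ h⟩, fun ⟨hlt, hge⟩ p hp q hq hp2 hpq => ?_⟩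
  have hqw : q ∈ w := (List.mem_cons.1 hq).resolve_left (by omega)
  rw [pair_sublist_cons]
  rcases List.mem_cons.1 hp with rfl | hpw
  · exact Or.inr ⟨rfl, hqw⟩
  left
  have hpx : p ≠ x := by rintro rfl; exact hxw hpw
  rcases lt_or_gt_of_ne hpx with h | h
  · refine (hlt p ?_ q ?_ hp2 hpq).trans List.filter_sublist <;>
      rw [List.mem_filter, decide_eq_true_eq]
    exacts [⟨hpw, h⟩, ⟨hqw, by omega⟩]
  · refine (hge p ?_ q ?_ hp2 hpq).trans List.filter_sublist <;>
      rw [List.mem_filter, decide_eq_true_eq]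
    exacts [⟨hpw, h.le⟩, ⟨hqw, by omega⟩]

lemma head_even_of_cons_mem_altOrders (hlo : lo % 2 = 1) (hhi : lo + 2 ≤ hi)
    (h : x :: w ∈ altOrders lo hi) : x % 2 = 0 := by
  by_contra hx
  have hmem {p : ℕ} : p ∈ x :: w ↔ lo ≤ p ∧ p < hi := mem_of_mem_altOrders h
  have hx' := hmem.1 List.mem_cons_self
  obtain ⟨y, hyx, hy⟩ : ∃ y, (x = y + 1 ∨ y = x + 1) ∧ lo ≤ y ∧ y < hi := by
    rcases lt_or_ge (x + 1) hi with hlt | hge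
    · exact ⟨x + 1, by omega⟩
    · exact ⟨x - 1, by omega⟩
  have hsub := (mem_altOrders.1 h).2 y (hmem.2 hy) x List.mem_cons_self (by omega) hyx
  have hxw : x ∈ w := by
    rcases pair_sublist_cons.1 hsub with hsub | ⟨-, hxw⟩
    · exact hsub.subset (by simp)
    · exact hxw
  exact (List.nodup_cons.1 (nodup_of_mem_altOrders h)).1 hxw

lemma cons_perm_Ico_iff :
    x :: w ~ List.Ico lo hi ↔ (lo ≤ x ∧ x < hi) ∧ w.filter (· < x) ~ List.Ico lo x ∧
      w.filter (x ≤ ·) ~ List.Ico (x + 1) hi := by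
  constructor
  · intro h
    obtain ⟨hlx, hxhi⟩ := List.Ico.mem.1 (h.subset List.mem_cons_self)
    rw [← List.Ico.append_consecutive hlx hxhi.le, List.Ico.eq_cons hxhi] at h
    have hw : w ~ List.Ico lo x ++ List.Ico (x + 1) hi := (h.trans List.perm_middle).cons_inv
    refine ⟨⟨hlx, hxhi⟩, ?_, ?_⟩
    · refine (hw.filter _).trans (.of_eq ?_)
      rw [List.filter_append, List.filter_eq_self.2, List.filter_eq_nil_iff.2, List.append_nil] <;>
        simp only [List.Ico.mem, decide_eq_true_eq] <;> omega
    · refine (hw.filter _).trans (.of_eq ?_)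
      rw [List.filter_append, List.filter_eq_nil_iff.2, List.filter_eq_self.2, List.nil_append] <;>
        simp only [List.Ico.mem, decide_eq_true_eq] <;> omega
  · rintro ⟨⟨hlx, hxhi⟩, hlt, hge⟩
    have hw : w ~ List.Ico lo x ++ List.Ico (x + 1) hi := by
      have := List.filter_append_perm (· < x) w
      simp only [← decide_not, not_lt] at this
      exact this.symm.trans (hlt.append hge)
    rw [← List.Ico.append_consecutive hlx hxhi.le, List.Ico.eq_cons hxhi]
    exact (hw.cons x).trans List.perm_middle.symm

lemma cons_mem_altOrders_iff (hlo : lo % 2 = 1) (hhi : lo + 2 ≤ hi) :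
    x :: w ∈ altOrders lo hi ↔ ((lo ≤ x ∧ x < hi) ∧ x % 2 = 0) ∧
      w.filter (· < x) ∈ altOrders lo x ∧ w.filter (x ≤ ·) ∈ altOrders (x + 1) hi := by
  have hxw (h : w.filter (x ≤ ·) ~ List.Ico (x + 1) hi) : x ∉ w := fun hxw => by
    have := List.Ico.mem.1 (h.subset (List.mem_filter.2 ⟨hxw, by simp⟩))
    omega
  constructor
  · intro h
    have hx := head_even_of_cons_mem_altOrders hlo hhi h
    obtain ⟨hperm, halt⟩ := mem_altOrders.1 h
    obtain ⟨hmem, hlt, hge⟩ := cons_perm_Ico_iff.1 hperm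
    obtain ⟨hltAlt, hgeAlt⟩ := (isAltOrder_cons hx (hxw hge)).1 halt
    exact ⟨⟨hmem, hx⟩, mem_altOrders.2 ⟨hlt, hltAlt⟩, mem_altOrders.2 ⟨hge, hgeAlt⟩⟩
  · rintro ⟨⟨hmem, hx⟩, hlt, hge⟩
    rw [mem_altOrders] at hlt hge ⊢
    exact ⟨cons_perm_Ico_iff.2 ⟨hmem, hlt.1, hge.1⟩,
      (isAltOrder_cons hx (hxw hge.1)).2 ⟨hlt.2, hge.2⟩⟩

lemma mem_shuffles_altOrders_iff (hu : u ∈ altOrders lo x) (hv : v ∈ altOrders (x + 1) hi) :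
    w ∈ shuffles u v ↔ w.filter (· < x) = u ∧ w.filter (x ≤ ·) = v :=
  mem_shuffles_iff_filter_lt w (fun _ ha => ((mem_of_mem_altOrders hu).1 ha).2)
    fun _ hb => Nat.le_of_succ_le ((mem_of_mem_altOrders hv).1 hb).1

lemma nodup_shuffles_altOrders (hu : u ∈ altOrders lo x) (hv : v ∈ altOrders (x + 1) hi) :
    (shuffles u v).Nodup :=
  nodup_shuffles fun a hau hav => by
    have := (mem_of_mem_altOrders hu).1 hau
    have := (mem_of_mem_altOrders hv).1 hav
    omega

lemma sum_altOrders {M : Type*} [AddCommMonoid M] (hlo : lo % 2 = 1) (hhi : lo + 2 ≤ hi)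
    (f : List ℕ → M) :
    ∑ r ∈ altOrders lo hi, f r =
      ∑ x ∈ Finset.Ico lo hi with x % 2 = 0, ∑ u ∈ altOrders lo x, ∑ v ∈ altOrders (x + 1) hi,
        ((shuffles u v).map fun w => f (x :: w)).sum := by
  have hcons {r : List ℕ} (hr : r ∈ altOrders lo hi) : ∃ x w, r = x :: w :=
    List.exists_cons_of_length_pos (by rw [length_of_mem_altOrders hr]; omega)
  symm
  calc
    _ = ∑ x ∈ Finset.Ico lo hi with x % 2 = 0, ∑ u ∈ altOrders lo x,
          ∑ v ∈ altOrders (x + 1) hi, ∑ w ∈ (shuffles u v).toFinset, f (x :: w) :=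
        Finset.sum_congr rfl fun _ _ => Finset.sum_congr rfl fun _ hu =>
          Finset.sum_congr rfl fun _ hv =>
            (List.sum_toFinset _ (nodup_shuffles_altOrders hu hv)).symm
    _ = _ := by
      simp only [Finset.sum_sigma']
      refine Finset.sum_nbij' (fun t => t.1 :: t.2.2.2)
        (fun r => ⟨r.headI, r.tail.filter (· < r.headI), r.tail.filter (r.headI ≤ ·), r.tail⟩)
        ?_ ?_ ?_ ?_ ?_
      · rintro ⟨x, u, v, w⟩ h
        simp only [Finset.mem_sigma, Finset.mem_filter, Finset.mem_Ico, List.mem_toFinset] at h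
        obtain ⟨hx, hu, hv, hw⟩ := h
        obtain ⟨rfl, rfl⟩ := (mem_shuffles_altOrders_iff hu hv).1 hw
        exact (cons_mem_altOrders_iff hlo hhi).2 ⟨hx, hu, hv⟩
      · intro r hr
        obtain ⟨x, w, rfl⟩ := hcons hr
        obtain ⟨hx, hu, hv⟩ := (cons_mem_altOrders_iff hlo hhi).1 hr
        simp only [Finset.mem_sigma, Finset.mem_filter, Finset.mem_Ico, List.mem_toFinset]
        exact ⟨hx, hu, hv, (mem_shuffles_altOrders_iff hu hv).2 ⟨rfl, rfl⟩⟩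
      · rintro ⟨x, u, v, w⟩ h
        simp only [Finset.mem_sigma, Finset.mem_filter, Finset.mem_Ico, List.mem_toFinset] at h
        obtain ⟨-, hu, hv, hw⟩ := h
        obtain ⟨rfl, rfl⟩ := (mem_shuffles_altOrders_iff hu hv).1 hw
        rfl
      · intro r hr
        obtain ⟨x, w, rfl⟩ := hcons hr
        rfl
      · exact fun _ _ => rfl

lemma sum_altOrders_of_mul {R : Type*} [CommSemiring R] (hlo : lo % 2 = 1) (hhi : lo + 2 ≤ hi)
    (f : List ℕ → R) (c : ℕ → R)
    (h : ∀ x, lo ≤ x → x % 2 = 0 → ∀ u ∈ altOrders lo x, ∀ v ∈ altOrders (x + 1) hi,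
      ((shuffles u v).map fun w => f (x :: w)).sum = c x * (f u * f v)) :
    ∑ r ∈ altOrders lo hi, f r =
      ∑ x ∈ Finset.Ico lo hi with x % 2 = 0,
        c x * ((∑ u ∈ altOrders lo x, f u) * ∑ v ∈ altOrders (x + 1) hi, f v) := by
  rw [sum_altOrders hlo hhi]
  refine Finset.sum_congr rfl fun x hx => ?_
  simp only [Finset.mem_filter, Finset.mem_Ico] at hx
  rw [Finset.sum_mul_sum, Finset.mul_sum]
  refine Finset.sum_congr rfl fun u hu => ?_
  rw [Finset.mul_sum]
  exact Finset.sum_congr rfl fun v hv => h x hx.1.1 hx.2 u hu v hv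

end AltOrders

section AltOrderStatistics

open LaurentPolynomial

/-- In the words of positions below, `EvenStep p q` with `p` before `q` says that the entry at the
even position `q` is smaller than the entry at `p = q + 2`, an ascent of `π_e`. -/
abbrev EvenStep (p q : ℕ) : Prop := q % 2 = 0 ∧ p = q + 2

/-- The image of the position `p` under `κ_N`, except that the fixed point `1` is sent to `0`, and,
for even `N`, the fixed point `N` to `N + 1`. This changes no comparison between positions and does
not depend on `N`. -/
def kappaRank (p : ℕ) : ℕ := if p % 2 = 0 then p + 1 else p - 1

/-- The exponent `inv(π) - asc(π_e)` in terms of the word of positions of `π`. -/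
def invSubAsc (r : List ℕ) : ℤ := countPairs (· < ·) r - countPairs EvenStep r

variable {lo hi x : ℕ} {u v w : List ℕ}

lemma kappaRank_lt {a : ℕ} (hx : x % 2 = 0) (h : a < x) : kappaRank a < x := by
  grind [kappaRank]

lemma le_kappaRank {b : ℕ} (hx : x % 2 = 0) (h : x ≤ b) : x ≤ kappaRank b := by
  grind [kappaRank]

lemma countP_evenStep (hx : x % 2 = 0) (hx2 : 2 ≤ x) (hw : w.Nodup) :
    w.countP (EvenStep x ·) = if x - 2 ∈ w then 1 else 0 := by
  rw [← hw.count, List.count]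
  exact List.countP_congr fun q _ => by grind

lemma countPairs_lt_cons (hu : u ∈ altOrders lo x) (hv : v ∈ altOrders (x + 1) hi)
    (hw : w ∈ shuffles u v) :
    countPairs (· < ·) (x :: w) = countPairs (· < ·) w + v.length := by
  have hltu : u.countP (x < ·) = 0 := List.countP_eq_zero.2 fun a ha => by
    simpa using ((mem_of_mem_altOrders hu).1 ha).2.le
  have hltv : v.countP (x < ·) = v.length := List.countP_eq_length.2 fun b hb => by
    simpa using ((mem_of_mem_altOrders hv).1 hb).1
  rw [countPairs_cons, (perm_append_of_mem_shuffles hw).countP_eq, List.countP_append, hltu, hltv,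
    zero_add]

lemma countPairs_evenStep_cons (hlo : lo % 2 = 1) (hx : x % 2 = 0) (hlx : lo ≤ x)
    (hu : u ∈ altOrders lo x) (hv : v ∈ altOrders (x + 1) hi) (hw : w ∈ shuffles u v) :
    countPairs EvenStep (x :: w) =
      countPairs EvenStep u + countPairs EvenStep v + if x = lo + 1 then 0 else 1 := by
  have hperm := perm_append_of_mem_shuffles hw
  have hu' {p : ℕ} := mem_of_mem_altOrders (p := p) hu
  have hv' {p : ℕ} := mem_of_mem_altOrders (p := p) hv
  have hnodup : w.Nodup := hperm.nodup_iff.2 <|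
    (nodup_of_mem_altOrders hu).append (nodup_of_mem_altOrders hv) fun a hau hav => by
      grind
  have hmem : x - 2 ∈ w ↔ x ≠ lo + 1 := by
    rw [hperm.mem_iff, List.mem_append, hu', hv']
    omega
  rw [countPairs_cons, countP_evenStep hx (by omega) hnodup, countPairs_of_mem_shuffles _ _ hw]
  · simp only [hmem, ite_not]
  · intro a ha b hb
    grind

lemma invSubAsc_cons (hlo : lo % 2 = 1) (hx : x % 2 = 0) (hlx : lo ≤ x)
    (hu : u ∈ altOrders lo x) (hv : v ∈ altOrders (x + 1) hi) (hw : w ∈ shuffles u v) :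
    invSubAsc (x :: w) = v.length - (if x = lo + 1 then 0 else 1) -
      (countPairs EvenStep u + countPairs EvenStep v) + countPairs (· < ·) w := by
  rw [invSubAsc, countPairs_lt_cons hu hv hw, countPairs_evenStep_cons hlo hx hlx hu hv hw]
  push_cast
  ring

lemma sum_T_invSubAsc_cons_shuffles (hlo : lo % 2 = 1) (hx : x % 2 = 0) (hlx : lo ≤ x)
    (hu : u ∈ altOrders lo x) (hv : v ∈ altOrders (x + 1) hi) :
    ((shuffles u v).map fun w => (T (invSubAsc (x :: w)) : ℤ[T;T⁻¹])).sum =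
      T (v.length - if x = lo + 1 then 0 else 1) * qBinom (T 1) u.length v.length *
        (T (invSubAsc u) * T (invSubAsc v)) := by
  have hlt : ∀ a ∈ u, ∀ b ∈ v, a < b ∧ ¬b < a := fun a ha b hb => by
    have := (mem_of_mem_altOrders hu).1 ha
    have := (mem_of_mem_altOrders hv).1 hb
    omega
  have hT : ∀ w ∈ shuffles u v, (T (invSubAsc (x :: w)) : ℤ[T;T⁻¹]) =
      T (v.length - (if x = lo + 1 then 0 else 1) -
        (countPairs EvenStep u + countPairs EvenStep v)) * T 1 ^ countPairs (· < ·) w :=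
    fun w hw => by rw [T_pow, mul_one, ← T_add, invSubAsc_cons hlo hx hlx hu hv hw]
  rw [List.map_congr_left hT, List.sum_map_mul_left, sum_countPairs_shuffles (· < ·) _ hlt,
    ← mul_assoc, mul_right_comm _ (qBinom ..), T_pow, ← T_add, ← T_add, ← T_add]
  congr 2
  simp only [invSubAsc]
  push_cast
  ring

lemma kappaRank_lt_kappaRank_head {b : ℕ} (hx : x % 2 = 0) (hv : b :: v ∈ altOrders (x + 1) hi) :
    kappaRank x < kappaRank b ↔ v.length + 1 ≠ 1 := by
  have hlen : v.length + 1 = hi - (x + 1) := length_of_mem_altOrders hv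
  have hb := (mem_of_mem_altOrders hv).1 List.mem_cons_self
  constructor
  · intro h hv1
    grind [kappaRank]
  · intro hv1
    have hb2 := head_even_of_cons_mem_altOrders (by omega) (by omega) hv
    grind [kappaRank]

lemma sum_revMaj_map_kappaRank_cons_shuffles {R : Type*} [CommSemiring R] (q : R)
    (hx : x % 2 = 0) (hu : u ∈ altOrders lo x) (hv : v ∈ altOrders (x + 1) hi) :
    ((shuffles u v).map fun w => q ^ revMaj ((x :: w).map kappaRank)).sum =
      q ^ (if v.length = 1 then 0 else v.length) * qBinom q u.length v.length *
        (q ^ revMaj (u.map kappaRank) * q ^ revMaj (v.map kappaRank)) := by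
  have hux : ∀ a ∈ u.map kappaRank, a < x := by
    simpa using fun a ha => kappaRank_lt hx ((mem_of_mem_altOrders hu).1 ha).2
  have hxv : ∀ b ∈ v.map kappaRank, x ≤ b := by
    simpa using fun b hb => le_kappaRank hx (Nat.le_of_succ_le ((mem_of_mem_altOrders hv).1 hb).1)
  have hxu : revMaj (kappaRank x :: u.map kappaRank) = revMaj (u.map kappaRank) :=
    revMaj_cons_of_forall_le fun a ha => (hux a ha).le.trans (le_kappaRank hx le_rfl)
  calc
    _ = ((shuffles (u.map kappaRank) (v.map kappaRank)).map
          fun w => q ^ revMaj (kappaRank x :: w)).sum := by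
      rw [shuffles_map, List.map_map]
      rfl
    _ = _ := by
      cases v with
      | nil => simp [hxu]
      | cons b v =>
        have hxb := kappaRank_lt_kappaRank_head hx hv
        rw [List.map_cons, sum_revMaj_cons_shuffles _ _ _
          fun c hcu hcv => (hux c hcu).not_ge (hxv c hcv), hxu]
        simp only [hxb, List.length_map, ite_not, List.length_cons]
        ring

/-- The amount by which the exponents of `inv(π) - asc(π_e)` exceed those of `maj(κ_N π⁻¹)` over
`Alt_N`. -/
def oddExcess (N : ℕ) : ℤ := if N % 2 = 1 ∧ N ≠ 1 then 1 else 0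

lemma T_mul_qBinom_mul_T_oddExcess {j k : ℕ} (hj : j % 2 = 1) :
    (T (k - if j = 1 then 0 else 1) * qBinom (T 1) j k * (T (oddExcess j) * T (oddExcess k)) :
        ℤ[T;T⁻¹]) =
      T (oddExcess (j + 1 + k)) * (T 1 ^ (if k = 1 then 0 else k) * qBinom (T 1) j k) := by
  rw [mul_right_comm, ← mul_assoc (T (oddExcess (j + 1 + k))), T_pow, ← T_add, ← T_add, ← T_add]
  congr 2
  grind [oddExcess]

theorem sum_T_invSubAsc_altOrders (hlo : lo % 2 = 1) :
    ∑ r ∈ altOrders lo hi, (T (invSubAsc r) : ℤ[T;T⁻¹]) =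
      T (oddExcess (hi - lo)) * ∑ r ∈ altOrders lo hi, T 1 ^ revMaj (r.map kappaRank) := by
  induction hL : hi - lo using Nat.strong_induction_on generalizing lo hi with
  | _ L ih =>
  subst hL
  rcases lt_or_ge hi (lo + 2) with hhi | hhi
  · rw [Finset.mul_sum]
    refine Finset.sum_congr rfl fun r hr => ?_
    have hlen := length_of_mem_altOrders hr
    rcases r with _ | ⟨a, _ | ⟨b, r⟩⟩
    · simp [← hlen, invSubAsc, oddExcess]
    · simp [← hlen, invSubAsc, oddExcess]
    · rw [List.length_cons, List.length_cons] at hlen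
      omega
  · rw [sum_altOrders_of_mul hlo hhi (fun r => T (invSubAsc r))
        (fun x => T ((hi - (x + 1) : ℕ) - if x - lo = 1 then 0 else 1) *
          qBinom (T 1) (x - lo) (hi - (x + 1))),
      sum_altOrders_of_mul hlo hhi (fun r => T 1 ^ revMaj (r.map kappaRank))
        (fun x => T 1 ^ (if hi - (x + 1) = 1 then 0 else hi - (x + 1)) *
          qBinom (T 1) (x - lo) (hi - (x + 1))), Finset.mul_sum]
    · refine Finset.sum_congr rfl fun x hx => ?_
      simp only [Finset.mem_filter, Finset.mem_Ico] at hx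
      have hlen : x - lo + 1 + (hi - (x + 1)) = hi - lo := by omega
      rw [ih (x - lo) (by omega) hlo rfl, ih (hi - (x + 1)) (by omega) (by omega) rfl,
        mul_mul_mul_comm (T (oddExcess (x - lo))), ← mul_assoc,
        T_mul_qBinom_mul_T_oddExcess (by omega), hlen, mul_assoc]
    · intro x _ hx u hu v hv
      rw [sum_revMaj_map_kappaRank_cons_shuffles _ hx hu hv, length_of_mem_altOrders hu,
        length_of_mem_altOrders hv]
    · intro x hlx hx u hu v hv
      have hlxlo : x = lo + 1 ↔ x - lo = 1 := by omega
      rw [sum_T_invSubAsc_cons_shuffles hlo hx hlx hu hv, length_of_mem_altOrders hu,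
        length_of_mem_altOrders hv]
      simp only [hlxlo]

end AltOrderStatistics

lemma countPairs_eq_card {α β : Type*} [DecidableEq α] [LinearOrder β] (R : α → α → Prop)
    [DecidableRel R] {f : α → β} {r : List α} (hr : r.Pairwise fun p q => f q < f p) :
    countPairs R r =
      (((r.toFinset ×ˢ r.toFinset).filter fun p => R p.1 p.2 ∧ f p.2 < f p.1)).card := by
  induction r with
  | nil => simp
  | cons x w ih =>
    rw [List.pairwise_cons] at hr
    have hxw : x ∉ w.toFinset := fun h => lt_irrefl _ (hr.1 x (List.mem_toFinset.1 h))
    have hw : w.Nodup := hr.2.imp fun h => by rintro rfl; exact lt_irrefl _ h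
    have hleft : ∑ q ∈ w.toFinset, (if R x q ∧ f q < f x then 1 else 0) = w.countP (R x ·) := by
      rw [← Finset.card_filter, List.countP_eq_length_filter,
        ← List.toFinset_card_of_nodup (hw.filter _), List.toFinset_filter]
      refine congrArg Finset.card (Finset.filter_congr fun q hq => ?_)
      simp [hr.1 q (List.mem_toFinset.1 hq)]
    have hright : ∑ p ∈ w.toFinset, (if R p x ∧ f x < f p then 1 else 0) = 0 :=
      Finset.sum_eq_zero fun p hp => if_neg fun h =>
        h.2.not_gt (hr.1 p (List.mem_toFinset.1 hp))
    rw [countPairs_cons, ih hr.2, Finset.card_filter, Finset.card_filter, Finset.sum_product,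
      Finset.sum_product, List.toFinset_cons, Finset.sum_insert hxw, Finset.sum_insert hxw, hleft]
    simp only [Finset.sum_insert hxw, Finset.sum_add_distrib, hright, lt_self_iff_false, and_false,
      if_false]
    ring

lemma majW_getD (d : ℕ) (r : List ℕ) :
    majW r.length (fun i => r.getD (r.length - i) d) = revMaj r := by
  induction r with
  | nil => simp [majW]
  | cons x w ih =>
    cases w with
    | nil => simp [majW]
    | cons y t =>
      rw [revMaj_cons_cons, ← ih, majW, majW, List.length_cons, List.length_cons,
        Nat.add_sub_cancel, Nat.add_sub_cancel, Finset.sum_Icc_succ_top (by omega)]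
      congr 1
      · refine Finset.sum_congr rfl fun i hi => ?_
        rw [Finset.mem_Icc] at hi
        rw [show t.length + 1 + 1 - i = (t.length + 1 - i) + 1 by omega,
          show t.length + 1 + 1 - (i + 1) = (t.length + 1 - (i + 1)) + 1 by omega,
          List.getD_cons_succ, List.getD_cons_succ]
      · simp

lemma pair_sublist_iff_of_pairwise {α β : Type*} [LinearOrder β] {f : α → β} {r : List α}
    (hr : r.Pairwise fun p q => f q < f p) {p q : α} (hp : p ∈ r) (hq : q ∈ r) :
    [p, q].Sublist r ↔ f q < f p := by
  refine ⟨fun h => by simpa using hr.sublist h, fun h => ?_⟩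
  induction r with
  | nil => simp at hp
  | cons x r ih =>
    rw [List.pairwise_cons] at hr
    rw [pair_sublist_cons]
    rcases List.mem_cons.1 hq with rfl | hqr
    · rcases List.mem_cons.1 hp with rfl | hpr
      · exact absurd h (lt_irrefl _)
      · exact absurd h (hr.1 _ hpr).not_gt
    · rcases List.mem_cons.1 hp with rfl | hpr
      · exact Or.inr ⟨rfl, hqr⟩
      · exact Or.inl (ih hr.2 hpr hqr)

section OrderList

variable {N : ℕ} (π : Equiv.Perm (Fin N))

/-- The positions of the entries of `π`, listed by decreasing value. -/
def orderList : List ℕ :=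
  List.ofFn fun k : Fin N => (π.symm k.rev : ℕ) + 1

lemma word_succ (i : Fin N) : word π (i + 1) = π i + 1 := by
  simp [word]

lemma length_orderList : (orderList π).length = N := List.length_ofFn

lemma pairwise_orderList : (orderList π).Pairwise fun p q => word π q < word π p := by
  rw [orderList, List.pairwise_ofFn]
  intro i j hij
  rw [word_succ, word_succ, Equiv.apply_symm_apply, Equiv.apply_symm_apply]
  exact Nat.succ_lt_succ (Fin.rev_lt_rev.2 hij)

variable {π} in
lemma mem_orderList {p : ℕ} : p ∈ orderList π ↔ 1 ≤ p ∧ p ≤ N := by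
  rw [orderList, List.mem_ofFn]
  constructor
  · rintro ⟨k, rfl⟩
    omega
  · intro h
    refine ⟨(π ⟨p - 1, by omega⟩).rev, ?_⟩
    simp only [Fin.rev_rev, Equiv.symm_apply_apply]
    omega

lemma orderList_perm : (orderList π).Perm (List.Ico 1 (N + 1)) := by
  have hnodup : (orderList π).Nodup :=
    (pairwise_orderList π).imp fun h => by rintro rfl; exact lt_irrefl _ h
  refine (List.perm_ext_iff_of_nodup hnodup (List.Ico.nodup _ _)).2 fun p => ?_
  rw [mem_orderList, List.Ico.mem, Nat.lt_succ_iff]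

lemma mem_altPerms_iff_s7 : π ∈ altPerms N ↔ orderList π ∈ altOrders 1 (N + 1) := by
  have hpair {p q : ℕ} (hp : p ∈ orderList π) (hq : q ∈ orderList π) :=
    pair_sublist_iff_of_pairwise (pairwise_orderList π) hp hq
  rw [mem_altOrders, and_iff_right (orderList_perm π), altPerms, Finset.mem_filter,
    and_iff_right (Finset.mem_univ π)]
  constructor
  · intro h p hp q hq hp2 hpq
    rw [hpair hp hq]
    rw [mem_orderList] at hp hq
    rcases hpq with rfl | rfl
    · exact (h p (Finset.mem_Icc.2 (by omega))).2 hp2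
    · exact (h q (Finset.mem_Icc.2 (by omega))).1 (by omega)
  · intro h i hi
    rw [Finset.mem_Icc] at hi
    have hi₀ : i ∈ orderList π := mem_orderList.2 (by omega)
    have hi₁ : i + 1 ∈ orderList π := mem_orderList.2 (by omega)
    exact ⟨fun hi2 => (hpair hi₁ hi₀).1 (h _ hi₁ _ hi₀ (by omega) (Or.inr rfl)),
      fun hi2 => (hpair hi₀ hi₁).1 (h _ hi₀ _ hi₁ hi2 (Or.inl rfl))⟩

lemma orderList_injective : Function.Injective (orderList : Equiv.Perm (Fin N) → List ℕ) := by
  intro π ρ h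
  have hsymm : π.symm = ρ.symm := by
    ext k
    simpa using congrFun (List.ofFn_injective h) k.rev
  simpa using congrArg Equiv.symm hsymm

lemma exists_orderList_eq {r : List ℕ} (hr : r.Perm (List.Ico 1 (N + 1))) :
    ∃ π : Equiv.Perm (Fin N), orderList π = r := by
  have hcard : (List.Ico 1 (N + 1)).permutations.toFinset.card ≤
      (Finset.univ : Finset (Equiv.Perm (Fin N))).card := by
    rw [List.toFinset_card_of_nodup (List.nodup_permutations _ (List.Ico.nodup _ _)),
      List.length_permutations, List.Ico.length, Finset.card_univ, Fintype.card_perm,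
      Fintype.card_fin, Nat.add_sub_cancel]
  obtain ⟨π, -, hπ⟩ := Finset.surjOn_of_injOn_of_card_le orderList
    (fun π _ => by simpa using orderList_perm π) orderList_injective.injOn hcard
    (by simpa using hr : r ∈ _)
  exact ⟨π, hπ⟩

lemma sum_altPerms {M : Type*} [AddCommMonoid M] (f : List ℕ → M) :
    ∑ π ∈ altPerms N, f (orderList π) = ∑ r ∈ altOrders 1 (N + 1), f r := by
  refine Finset.sum_nbij orderList (fun π hπ => (mem_altPerms_iff_s7 π).1 hπ)
    orderList_injective.injOn (fun r hr => ?_) fun _ _ => rfl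
  obtain ⟨π, rfl⟩ := exists_orderList_eq (mem_altOrders.1 hr).1
  exact ⟨π, (mem_altPerms_iff_s7 π).2 hr, rfl⟩

lemma toFinset_orderList : (orderList π).toFinset = Finset.Icc 1 N := by
  ext p
  rw [List.mem_toFinset, mem_orderList, Finset.mem_Icc]

lemma invW_eq_countPairs : invW N (word π) = countPairs (· < ·) (orderList π) := by
  rw [countPairs_eq_card _ (pairwise_orderList π), toFinset_orderList, invW]

lemma ascW_evenWord_eq_countPairs :
    ascW (N / 2) (evenWord π) = countPairs EvenStep (orderList π) := by
  rw [countPairs_eq_card _ (pairwise_orderList π), toFinset_orderList, ascW]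
  refine Finset.card_nbij' (fun i => (2 * i + 2, 2 * i)) (fun p => p.2 / 2) ?_ ?_ ?_ ?_
  · intro i hi
    rw [Finset.mem_coe, Finset.mem_filter, Finset.mem_Icc, evenWord, evenWord] at hi
    rw [Finset.mem_coe, Finset.mem_filter, Finset.mem_product, Finset.mem_Icc, Finset.mem_Icc]
    dsimp only
    exact ⟨by omega, ⟨by omega, rfl⟩, hi.2⟩
  · rintro ⟨p, q⟩ h
    rw [Finset.mem_coe, Finset.mem_filter, Finset.mem_product, Finset.mem_Icc, Finset.mem_Icc] at h
    dsimp only at h ⊢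
    obtain ⟨hmem, ⟨hq, rfl⟩, hlt⟩ := h
    rw [Finset.mem_coe, Finset.mem_filter, Finset.mem_Icc, evenWord, evenWord,
      show 2 * (q / 2) = q by omega, show 2 * (q / 2 + 1) = q + 2 by omega]
    exact ⟨by omega, hlt⟩
  · intro i _
    simp
  · rintro ⟨p, q⟩ h
    obtain ⟨-, ⟨hq, hp⟩, -⟩ := Finset.mem_filter.1 h
    ext <;> simp only at hq hp ⊢ <;> omega

lemma kappaNat_lt_kappaNat_iff {j k : ℕ} (hj : 1 ≤ j ∧ j ≤ N) (hk : 1 ≤ k ∧ k ≤ N) :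
    kappaNat N j < kappaNat N k ↔ kappaRank j < kappaRank k := by
  grind [kappaNat, kappaRank]

lemma word_symm_eq_getD {i : ℕ} (hi : 1 ≤ i ∧ i ≤ N) :
    word π.symm i = (orderList π).getD (N - i) 0 := by
  have hlt : N - i < (orderList π).length := by rw [length_orderList]; omega
  rw [List.getD_eq_getElem _ _ hlt, word, dif_pos hi]
  simp only [orderList, List.getElem_ofFn]
  congr 3
  ext
  simp only [Fin.val_rev]
  omega

lemma majKappaInv_eq_revMaj : majKappaInv N π = revMaj ((orderList π).map kappaRank) := by
  have hword {i : ℕ} (hi : 1 ≤ i ∧ i ≤ N) : 1 ≤ word π.symm i ∧ word π.symm i ≤ N := by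
    rw [word, dif_pos hi]
    omega
  rw [← majW_getD (kappaRank 0), List.length_map, length_orderList, majKappaInv, majW, majW]
  refine Finset.sum_congr rfl fun i hi => ?_
  rw [Finset.mem_Icc] at hi
  rw [List.getD_map, List.getD_map, ← word_symm_eq_getD π (by omega),
    ← word_symm_eq_getD π (by omega)]
  exact if_congr (kappaNat_lt_kappaNat_iff (hword (by omega)) (hword (by omega))) rfl rfl

end OrderList

open LaurentPolynomial in
theorem statement_7_general (N : ℕ) :
    T (oddExcess N) * ∑ π ∈ altPerms N, (T (majKappaInv N π : ℤ) : ℤ[T;T⁻¹]) =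
      ∑ π ∈ altPerms N, T ((invW N (word π) : ℤ) - (ascW (N / 2) (evenWord π) : ℤ)) := by
  calc
    _ = T (oddExcess N) *
          ∑ r ∈ altOrders 1 (N + 1), (T 1 : ℤ[T;T⁻¹]) ^ revMaj (r.map kappaRank) := by
      rw [← sum_altPerms]
      simp only [majKappaInv_eq_revMaj, T_pow, mul_one]
    _ = ∑ r ∈ altOrders 1 (N + 1), T (invSubAsc r) := by
      rw [sum_T_invSubAsc_altOrders rfl, Nat.add_sub_cancel]
    _ = _ := by
      rw [← sum_altPerms]
      simp only [invSubAsc, invW_eq_countPairs, ascW_evenWord_eq_countPairs]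

theorem statement_7 (n : ℕ) (hn : 0 < n) :
    (∑ π ∈ altPerms (2 * n),
        (LaurentPolynomial.T (majKappaInv (2 * n) π : ℤ) : LaurentPolynomial ℤ)) =
      ∑ π ∈ altPerms (2 * n),
        (LaurentPolynomial.T
          ((invW (2 * n) (word π) : ℤ) - (ascW n (evenWord π) : ℤ)) :
            LaurentPolynomial ℤ) := by
  simpa [oddExcess] using statement_7_general (2 * n)

end Paper
end
end
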